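/- Let M be a complete Riemannian manifold isometrically immersed as a submanifold of a space form (Euclidean space ℝ^{n+k}, the round sphere S^{n+k}, or hyperbolic space H^{n+k}). Let μ = min_{p ∈ M} dim 𝒩_p be the minimal index of nullity of M, where 𝒩 is the nullity distribution of the second fundamental form of M. Then for every point p ∈ M with dim 𝒩_p = μ, the maximal integral manifold of 𝒩 through p (a totally geodesic submanifold of M, with the induced metric) is a complete Riemannian manifold. -/

import Mathlib

noncomputable section

open Set

/-- The three model space forms: Euclidean space, the round sphere, hyperbolic space. -/
inductive SpaceFormKind : Type
  | euclidean : SpaceFormKind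
  | sphere : SpaceFormKind
  | hyperbolic : SpaceFormKind

/-- The sign of the `i`-th coordinate in the ambient bilinear form: for the hyperbolic case the
ambient linear space is the Lorentz space `ℝ^{D-1,1}` whose last coordinate is timelike. -/
def formSign (k : SpaceFormKind) (D : ℕ) (i : Fin D) : ℝ :=
  match k with
  | .hyperbolic => if (i : ℕ) + 1 = D then -1 else 1
  | _ => 1

/-- The ambient bilinear form: the Euclidean inner product in the euclidean and spherical cases,
the Lorentz (Minkowski) form in the hyperbolic case. -/
def aForm (k : SpaceFormKind) {D : ℕ} (x y : EuclideanSpace ℝ (Fin D)) : ℝ :=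
  ∑ i, formSign k D i * x i * y i

/-- The space form, realized inside its ambient linear space: all of `ℝ^D`, the unit sphere,
or the hyperboloid model of hyperbolic space in Lorentz space. -/
def spaceForm (k : SpaceFormKind) (D : ℕ) : Set (EuclideanSpace ℝ (Fin D)) :=
  match k with
  | .euclidean => Set.univ
  | .sphere => {x | aForm .sphere x x = 1}
  | .hyperbolic => {x | aForm .hyperbolic x x = -1 ∧ ∀ i : Fin D, (i : ℕ) + 1 = D → 0 < x i}

/-- The normal space of the space form itself inside the ambient linear space at a point `p`:
trivial in the euclidean case, and spanned by the position vector in the other two cases. -/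
def radialAt (k : SpaceFormKind) {D : ℕ} (p : EuclideanSpace ℝ (Fin D)) :
    Submodule ℝ (EuclideanSpace ℝ (Fin D)) :=
  match k with
  | .euclidean => ⊥
  | _ => Submodule.span ℝ {p}

/-- The tangent space of a subset `S ⊆ ℝ^D` at `p`: the span of all velocities at `0` of smooth
curves inside `S` passing through `p` at time `0`. -/
def TangentAt {D : ℕ} (S : Set (EuclideanSpace ℝ (Fin D))) (p : EuclideanSpace ℝ (Fin D)) :
    Submodule ℝ (EuclideanSpace ℝ (Fin D)) :=
  Submodule.span ℝ {v | ∃ c : ℝ → EuclideanSpace ℝ (Fin D),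
    ContDiff ℝ (⊤ : ℕ∞) c ∧ (∀ t, c t ∈ S) ∧ c 0 = p ∧ deriv c 0 = v}

/-- `φ : U → ℝ^D` is a (smooth, embedded) local parametrization of `S` around `p`. -/
structure IsLocalParam {D : ℕ} (S : Set (EuclideanSpace ℝ (Fin D))) (n : ℕ)
    (φ : EuclideanSpace ℝ (Fin n) → EuclideanSpace ℝ (Fin D))
    (U : Set (EuclideanSpace ℝ (Fin n))) (p : EuclideanSpace ℝ (Fin D)) : Prop where
  isOpen : IsOpen U
  smooth : ContDiffOn ℝ (⊤ : ℕ∞) φ U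
  immersion : ∀ x ∈ U, Function.Injective (fderivWithin ℝ φ U x)
  injOn : Set.InjOn φ U
  openImage : ∃ V, IsOpen V ∧ φ '' U = S ∩ V
  mem : p ∈ φ '' U
  embedding : ∃ ψ, ContinuousOn ψ (φ '' U) ∧ ∀ x ∈ U, ψ (φ x) = x

/-- `S ⊆ ℝ^D` is an `n`-dimensional smooth embedded submanifold. -/
def IsSubmanifold {D : ℕ} (S : Set (EuclideanSpace ℝ (Fin D))) (n : ℕ) : Prop :=
  ∀ p ∈ S, ∃ φ U, IsLocalParam S n φ U p

/-- The nullity space at `p` of the second fundamental form `α` of `S`, viewed as a submanifold of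
the space form of kind `k`:  a tangent vector `v` is in the nullity iff `α(v, w) = 0` for all
`w ∈ T_pS`; concretely, iff for every smooth tangent vector field `W` along a smooth curve `c` in
`S` with `c(0) = p`, `c'(0) = v`, the derivative `W'(0)` has no component normal to `S` inside the
space form, i.e. `W'(0)` lies in the sum of `T_pS` and the normal space of the space form itself. -/
def nullityAt (k : SpaceFormKind) {D : ℕ} (S : Set (EuclideanSpace ℝ (Fin D)))
    (p : EuclideanSpace ℝ (Fin D)) : Set (EuclideanSpace ℝ (Fin D)) :=
  {v | v ∈ TangentAt S p ∧ ∀ c W : ℝ → EuclideanSpace ℝ (Fin D),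
    ContDiff ℝ (⊤ : ℕ∞) c → (∀ t, c t ∈ S) → c 0 = p → deriv c 0 = v →
    ContDiff ℝ (⊤ : ℕ∞) W → (∀ t, W t ∈ TangentAt S (c t)) →
    deriv W 0 ∈ TangentAt S p ⊔ radialAt k p}

/-- The index of nullity of `S` at `p`. -/
def nullityIndex (k : SpaceFormKind) {D : ℕ} (S : Set (EuclideanSpace ℝ (Fin D)))
    (p : EuclideanSpace ℝ (Fin D)) : ℕ :=
  Set.finrank ℝ (nullityAt k S p)

/-- `γ : ℝ → ℝ^D` is a geodesic of the Riemannian (resp. Lorentzian-induced) submanifold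
`S` of the space form of kind `k`: a smooth curve in `S` whose acceleration is orthogonal,
with respect to the ambient bilinear form, to all tangent spaces of `S`. -/
structure IsGeodesicOn (k : SpaceFormKind) {D : ℕ} (S : Set (EuclideanSpace ℝ (Fin D)))
    (γ : ℝ → EuclideanSpace ℝ (Fin D)) : Prop where
  smooth : ContDiff ℝ (⊤ : ℕ∞) γ
  mem : ∀ t, γ t ∈ S
  accel_normal : ∀ t, ∀ v ∈ TangentAt S (γ t), aForm k (deriv (deriv γ) t) v = 0

/-- `S` is a (geodesically, equivalently metrically) complete Riemannian manifold: every
initial condition gives rise to a geodesic defined on all of `ℝ`. -/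
def GeodComplete (k : SpaceFormKind) {D : ℕ} (S : Set (EuclideanSpace ℝ (Fin D))) : Prop :=
  ∀ p ∈ S, ∀ v ∈ TangentAt S p, ∃ γ, IsGeodesicOn k S γ ∧ γ 0 = p ∧ deriv γ 0 = v

/-- The set of points of `S` where the index of nullity is minimal. -/
def minNullitySet (k : SpaceFormKind) {D : ℕ} (S : Set (EuclideanSpace ℝ (Fin D))) :
    Set (EuclideanSpace ℝ (Fin D)) :=
  {q | q ∈ S ∧ ∀ r ∈ S, nullityIndex k S q ≤ nullityIndex k S r}

/-- The maximal integral manifold (leaf) through `p` of the nullity distribution of `S`,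
restricted to the subset `A`: all points reachable from `p` by smooth curves inside `A`
everywhere tangent to the nullity distribution. -/
def leafThrough (k : SpaceFormKind) {D : ℕ} (S A : Set (EuclideanSpace ℝ (Fin D)))
    (p : EuclideanSpace ℝ (Fin D)) : Set (EuclideanSpace ℝ (Fin D)) :=
  {q | ∃ c : ℝ → EuclideanSpace ℝ (Fin D), ContDiff ℝ (⊤ : ℕ∞) c ∧ (∀ t, c t ∈ A) ∧
    (∀ t, deriv c t ∈ nullityAt k S (c t)) ∧ c 0 = p ∧ c 1 = q}

/-- The dimension of the ambient linear space: `n + k` for a submanifold `M^n ⊆ ℝ^{n+k}`,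
`n + k + 1` for `M^n ⊆ S^{n+k} ⊆ ℝ^{n+k+1}` and for `M^n ⊆ H^{n+k} ⊆ ℝ^{n+k,1}`. -/
def ambientDim (k : SpaceFormKind) (n codim : ℕ) : ℕ :=
  match k with
  | .euclidean => n + codim
  | _ => n + codim + 1

section NullityProof

open Filter Topology

section generic
set_option linter.unusedSectionVars false
variable {E : Type*} [NormedAddCommGroup E] [NormedSpace ℝ E]
variable {F : Type*} [NormedAddCommGroup F] [InnerProductSpace ℝ F]

/-- The derivative of a family of orthogonal projections vanishes once it kills the range. -/
lemma proj_deriv_zero (T : E → Submodule ℝ F) [∀ u, (T u).HasOrthogonalProjection]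
    {g' : E →L[ℝ] (F →L[ℝ] F)} {u0 w : E}
    (hg : HasFDerivAt (fun u => (T u).starProjection) g' u0)
    (h : ∀ v ∈ T u0, g' w v = 0) : g' w = 0 := by
  have happ : ∀ x : F, HasFDerivAt (fun u => (T u).starProjection x)
      ((ContinuousLinearMap.apply ℝ F x).comp g') u0 := fun x =>
    (ContinuousLinearMap.apply ℝ F x).hasFDerivAt.comp u0 hg
  have hmem : ∀ x : F, g' w x ∈ T u0 := by
    intro x
    have h1 : HasFDerivAt (fun u => (T u).starProjection ((T u).starProjection x)) _ u0 :=
      hg.clm_apply (happ x)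
    have h2 : (fun u => (T u).starProjection ((T u).starProjection x))
        = fun u => (T u).starProjection x := by
      funext u
      exact (Submodule.starProjection_eq_self_iff).2 (Submodule.starProjection_apply_mem _ _)
    rw [h2] at h1
    have h3 := congrArg (fun l => l w) (h1.unique (happ x))
    simp at h3
    rw [h _ (Submodule.starProjection_apply_mem _ _)] at h3
    rw [← Submodule.starProjection_eq_self_iff (K := T u0)]
    simpa using h3
  have hsymm : ∀ x y : F, inner ℝ (g' w x) y = inner ℝ x (g' w y) := by
    intro x y
    have h1 := (happ x).inner ℝ (hasFDerivAt_const y u0)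
    have h2 := (hasFDerivAt_const x u0).inner ℝ (happ y)
    have h3 : (fun u => inner ℝ ((T u).starProjection x) y)
        = fun u => inner ℝ x ((T u).starProjection y) := by
      funext u
      exact Submodule.inner_starProjection_left_eq_right _ _ _
    rw [h3] at h1
    have h4 := congrArg (fun l => l w) (h1.unique h2)
    simpa [fderivInnerCLM_apply] using h4
  ext x
  have : inner ℝ (g' w x) (g' w x) = 0 := by
    rw [hsymm, h _ (hmem x), inner_zero_right]
  simpa using this

/-- The (real) adjoint as a smooth map. -/
lemma adjoint_contDiff {E2 : Type*} [NormedAddCommGroup E2] [InnerProductSpace ℝ E2]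
    [CompleteSpace E2] [CompleteSpace F] {n : WithTop ℕ∞} :
    ContDiff ℝ n (fun A : E2 →L[ℝ] F => ContinuousLinearMap.adjoint A) := by
  have : IsBoundedLinearMap ℝ (fun A : E2 →L[ℝ] F => ContinuousLinearMap.adjoint A) := by
    refine ⟨⟨fun x y => map_add _ x y, fun c x => ?_⟩, 1, one_pos, fun x => ?_⟩
    · simp
    · simp
  exact this.contDiff

/-- The oblique projection onto the range of `A` along the `J`-orthogonal complement. -/
def oblProj {E2 : Type*} [NormedAddCommGroup E2] [InnerProductSpace ℝ E2]
    [CompleteSpace E2] [CompleteSpace F] (J : F →L[ℝ] F) (A : E2 →L[ℝ] F) : F →L[ℝ] F :=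
  A ∘L (ContinuousLinearMap.inverse ((ContinuousLinearMap.adjoint A) ∘L J ∘L A)) ∘L
    (ContinuousLinearMap.adjoint A) ∘L J

lemma exists_equiv_of_inj {E2 : Type*} [NormedAddCommGroup E2] [NormedSpace ℝ E2]
    [FiniteDimensional ℝ E2] (B : E2 →L[ℝ] E2) (h : Function.Injective B) :
    ∃ e : E2 ≃L[ℝ] E2, (e : E2 →L[ℝ] E2) = B := by
  refine ⟨(LinearEquiv.ofInjectiveEndo (B : E2 →ₗ[ℝ] E2) h).toContinuousLinearEquiv, ?_⟩
  ext x; rfl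

section
variable {E2 : Type*} [NormedAddCommGroup E2] [InnerProductSpace ℝ E2]
    [FiniteDimensional ℝ E2] [CompleteSpace E2] [CompleteSpace F]

lemma oblProj_contDiffAt {n : WithTop ℕ∞} (J : F →L[ℝ] F) (A : E → E2 →L[ℝ] F) {u0 : E}
    (hA : ContDiffAt ℝ n A u0)
    (hinj : Function.Injective ((ContinuousLinearMap.adjoint (A u0)) ∘L J ∘L (A u0))) :
    ContDiffAt ℝ n (fun u => oblProj J (A u)) u0 := by
  have hadj : ContDiffAt ℝ n (fun u => ContinuousLinearMap.adjoint (A u)) u0 :=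
    adjoint_contDiff.contDiffAt.comp u0 hA
  have hM : ContDiffAt ℝ n (fun u => (ContinuousLinearMap.adjoint (A u)) ∘L J ∘L (A u)) u0 :=
    hadj.clm_comp (contDiffAt_const.clm_comp hA)
  obtain ⟨e, he⟩ := exists_equiv_of_inj _ hinj
  have hinv : ContDiffAt ℝ n (ContinuousLinearMap.inverse : (E2 →L[ℝ] E2) → _)
      ((ContinuousLinearMap.adjoint (A u0)) ∘L J ∘L (A u0)) := by
    rw [← he]; exact contDiffAt_map_inverse e
  have hI : ContDiffAt ℝ n (fun u => ContinuousLinearMap.inverse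
      ((ContinuousLinearMap.adjoint (A u)) ∘L J ∘L (A u))) u0 :=
    ContDiffAt.comp (g := ContinuousLinearMap.inverse) u0 hinv hM
  exact hA.clm_comp (hI.clm_comp (hadj.clm_comp contDiffAt_const))

lemma oblProj_mem (J : F →L[ℝ] F) (A : E2 →L[ℝ] F) (x : F) :
    oblProj J A x ∈ LinearMap.range (A : E2 →ₗ[ℝ] F) := ⟨_, rfl⟩

lemma oblProj_apply_range (J : F →L[ℝ] F) (A : E2 →L[ℝ] F)
    (hinj : Function.Injective ((ContinuousLinearMap.adjoint A) ∘L J ∘L A)) (w : E2) :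
    oblProj J A (A w) = A w := by
  obtain ⟨e, he⟩ := exists_equiv_of_inj _ hinj
  have : (ContinuousLinearMap.adjoint A) (J (A w)) = e w := by
    have := congrArg (fun l => l w) he
    simpa using this.symm
  simp [oblProj, this, ← he]

lemma oblProj_ker (J : F →L[ℝ] F) (A : E2 →L[ℝ] F) (x : F)
    (h : ∀ w, inner ℝ (J x) (A w) = 0) : oblProj J A x = 0 := by
  have : (ContinuousLinearMap.adjoint A) (J x) = 0 := by
    refine ext_inner_right ℝ fun w => ?_
    rw [ContinuousLinearMap.adjoint_inner_left, h, inner_zero_left]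
  simp [oblProj, this]

lemma inner_oblProj (J : F →L[ℝ] F) (A : E2 →L[ℝ] F)
    (hinj : Function.Injective ((ContinuousLinearMap.adjoint A) ∘L J ∘L A)) (x : F) (w : E2) :
    inner ℝ (J (x - oblProj J A x)) (A w) = 0 := by
  obtain ⟨e, he⟩ := exists_equiv_of_inj _ hinj
  rw [← ContinuousLinearMap.adjoint_inner_left]
  have h1 : ∀ w, (ContinuousLinearMap.adjoint A) (J (A w)) = e w := by
    intro w
    have := congrArg (fun l => l w) he
    simpa using this.symm
  have : (ContinuousLinearMap.adjoint A) (J (x - oblProj J A x)) = 0 := by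
    rw [map_sub, map_sub]
    simp only [oblProj, ContinuousLinearMap.comp_apply]
    rw [h1, ← he]
    simp
  rw [this, inner_zero_left]

end

/-- Orthogonal projection on the range of a smooth family of injective maps is smooth. -/
lemma starProjection_contDiffAt [FiniteDimensional ℝ F] {E3 : Type*} [NormedAddCommGroup E3]
    [NormedSpace ℝ E3] [FiniteDimensional ℝ E3] {n : WithTop ℕ∞}
    (A : E → E3 →L[ℝ] F) {u0 : E} (hA : ContDiffAt ℝ n A u0)
    (hinj : ∀ᶠ u in 𝓝 u0, Function.Injective (A u)) :
    ContDiffAt ℝ n (fun u => (LinearMap.range (A u : E3 →ₗ[ℝ] F)).starProjection) u0 := by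
  let E2 := EuclideanSpace ℝ (Fin (Module.finrank ℝ E3))
  let e : E2 ≃L[ℝ] E3 := ContinuousLinearEquiv.ofFinrankEq (by simp [E2])
  let B : E → E2 →L[ℝ] F := fun u => (A u) ∘L (e : E2 →L[ℝ] E3)
  have hB : ContDiffAt ℝ n B u0 := hA.clm_comp contDiffAt_const
  have hBinj : ∀ u, Function.Injective (A u) → Function.Injective
      ((ContinuousLinearMap.adjoint (B u)) ∘L (ContinuousLinearMap.id ℝ F) ∘L (B u)) := by
    intro u hu
    rw [injective_iff_map_eq_zero]
    intro w hw
    have h1 : inner ℝ (B u w) (B u w) = 0 := by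
      rw [← ContinuousLinearMap.adjoint_inner_left]
      have : (ContinuousLinearMap.adjoint (B u)) (B u w) = 0 := by simpa using hw
      rw [this, inner_zero_left]
    have h2 : A u (e w) = 0 := by simpa [B] using h1
    have h3 : e w = 0 := hu (by simpa using h2)
    simpa using h3
  have h0 := oblProj_contDiffAt (ContinuousLinearMap.id ℝ F) B hB (hBinj u0 hinj.self_of_nhds)
  refine h0.congr_of_eventuallyEq ?_
  filter_upwards [hinj] with u hu
  ext1 x
  refine Submodule.eq_starProjection_of_mem_of_inner_eq_zero ?_ ?_
  · obtain ⟨w, hw⟩ := oblProj_mem (ContinuousLinearMap.id ℝ F) (B u) x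
    exact ⟨e w, hw⟩
  · rintro _ ⟨w, rfl⟩
    have := inner_oblProj (ContinuousLinearMap.id ℝ F) (B u) (hBinj u hu) x (e.symm w)
    simpa [B] using this

/-- Inverse function theorem in the shape used below. -/
lemma ift_local {E H : Type*} [NormedAddCommGroup E] [NormedSpace ℝ E] [FiniteDimensional ℝ E]
    [NormedAddCommGroup H] [NormedSpace ℝ H] [FiniteDimensional ℝ H]
    (h : E → H) {U : Set E} (hU : IsOpen U) {u0 : E} (hu0 : u0 ∈ U)
    (hh : ContDiffOn ℝ (⊤ : ℕ∞) h U) (hb : Function.Bijective (fderiv ℝ h u0)) :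
    ∃ κ : H → E, κ (h u0) = u0 ∧ (∀ᶠ u in 𝓝 u0, κ (h u) = u) ∧
      ∀ᶠ p in 𝓝 (h u0), κ p ∈ U ∧ h (κ p) = p ∧ ContDiffAt ℝ (⊤ : ℕ∞) κ p ∧
        Function.Bijective (fderiv ℝ h (κ p)) := by
  have hE : CompleteSpace E := FiniteDimensional.complete ℝ E
  have hH : CompleteSpace H := FiniteDimensional.complete ℝ H
  let e0 : E ≃L[ℝ] H :=
    (LinearEquiv.ofBijective (fderiv ℝ h u0 : E →ₗ[ℝ] H) hb).toContinuousLinearEquiv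
  have he0 : (e0 : E →L[ℝ] H) = fderiv ℝ h u0 := by ext x; rfl
  have hat : ∀ u ∈ U, ContDiffAt ℝ (⊤ : ℕ∞) h u := fun u hu => hh.contDiffAt (hU.mem_nhds hu)
  have hstrict : HasStrictFDerivAt h (e0 : E →L[ℝ] H) u0 := by
    rw [he0]; exact (hat u0 hu0).hasStrictFDerivAt (by simp)
  let e := hstrict.toOpenPartialHomeomorph h
  have hcoe : (e : E → H) = h := hstrict.toOpenPartialHomeomorph_coe
  have hsrc : u0 ∈ e.source := hstrict.mem_toOpenPartialHomeomorph_source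
  have htgt : h u0 ∈ e.target := by rw [← hcoe]; exact e.map_source hsrc
  have hsymm0 : e.symm (h u0) = u0 := by
    have := e.left_inv hsrc; rwa [hcoe] at this
  have hcont : ContinuousAt (fderiv ℝ h) u0 :=
    ((hat u0 hu0).fderiv_right (m := 0) (by simp)).continuousAt
  have hinv : ∀ᶠ u in 𝓝 u0, ∃ e1 : E ≃L[ℝ] H, (e1 : E →L[ℝ] H) = fderiv ℝ h u := by
    have := (ContinuousLinearEquiv.isOpen (𝕜 := ℝ) (E := E) (F := H)).mem_nhds ⟨e0, he0⟩
    exact hcont this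
  refine ⟨e.symm, hsymm0, ?_, ?_⟩
  · filter_upwards [e.open_source.mem_nhds hsrc] with u hu
    have := e.left_inv hu; rwa [hcoe] at this
  · have hcs : ContinuousAt e.symm (h u0) := e.continuousAt_symm htgt
    have hev : ∀ᶠ p in 𝓝 (h u0), e.symm p ∈ U ∧
        ∃ e1 : E ≃L[ℝ] H, (e1 : E →L[ℝ] H) = fderiv ℝ h (e.symm p) := by
      have hcs' : Tendsto e.symm (𝓝 (h u0)) (𝓝 u0) := by
        have := hcs.tendsto; rwa [hsymm0] at this
      have hUe : ∀ᶠ u in 𝓝 u0, u ∈ U := hU.mem_nhds hu0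
      exact hcs'.eventually (hUe.and hinv)
    filter_upwards [hev, e.open_target.mem_nhds htgt] with p hp hpt
    obtain ⟨hpU, e1, he1⟩ := hp
    refine ⟨hpU, ?_, ?_, ?_⟩
    · have := e.right_inv hpt; rwa [hcoe] at this
    · refine e.contDiffAt_symm hpt (f₀' := e1) ?_ ?_
      · rw [he1, hcoe]; exact ((hat _ hpU).differentiableAt (by simp)).hasFDerivAt
      · rw [hcoe]; exact hat _ hpU
    · rw [← he1]; exact e1.bijective

end generic

abbrev Fd (D : ℕ) := EuclideanSpace ℝ (Fin D)

/-- Local parametrization (general model space) with smooth local left inverses. -/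
structure LP {D : ℕ} {E : Type*} [NormedAddCommGroup E] [NormedSpace ℝ E]
    (X : Set (Fd D)) (φ : E → Fd D) (U : Set E) : Prop where
  isOpen : IsOpen U
  smooth : ContDiffOn ℝ (⊤ : ℕ∞) φ U
  maps : ∀ u ∈ U, φ u ∈ X
  inj : ∀ u ∈ U, Function.Injective (fderiv ℝ φ u)
  inv : ∀ u ∈ U, ∃ ψ : Fd D → E, ContDiffAt ℝ (⊤ : ℕ∞) ψ (φ u) ∧ ψ (φ u) = u ∧
    ∀ᶠ x in 𝓝[X] (φ u), ψ x ∈ U ∧ φ (ψ x) = x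

/-- Gauss map: orthogonal projection onto the tangent space. -/
def Gp {D : ℕ} (X : Set (Fd D)) (x : Fd D) : Fd D →L[ℝ] Fd D := (TangentAt X x).starProjection

section lp
set_option linter.unusedSectionVars false
variable {D : ℕ} {E : Type*} [NormedAddCommGroup E] [NormedSpace ℝ E] [FiniteDimensional ℝ E]
variable {X : Set (Fd D)} {φ : E → Fd D} {U : Set E}

lemma exists_small_curve (hU : IsOpen U) {u : E} (hu : u ∈ U) (w : E) :
    ∃ c : ℝ → E, ContDiff ℝ (⊤ : ℕ∞) c ∧ (∀ t, c t ∈ U) ∧ c 0 = u ∧ HasDerivAt c w 0 := by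
  obtain ⟨δ, hδ, hball⟩ := Metric.isOpen_iff.1 hU u hu
  have hw : 0 < ‖w‖ + 1 := by positivity
  set ε := δ / (‖w‖ + 1) with hε
  have hε0 : 0 < ε := by positivity
  refine ⟨fun t => u + (ε * Real.sin (t / ε)) • w, ?_, ?_, by simp, ?_⟩
  · have : ContDiff ℝ (⊤ : ℕ∞) (fun t : ℝ => ε * Real.sin (t / ε)) :=
      contDiff_const.mul (Real.contDiff_sin.comp (contDiff_id.div_const ε))
    exact contDiff_const.add (this.smul contDiff_const)
  · intro t
    apply hball
    rw [Metric.mem_ball, dist_eq_norm]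
    simp only [add_sub_cancel_left]
    rw [norm_smul, norm_mul, Real.norm_eq_abs, Real.norm_eq_abs, abs_of_pos hε0]
    have h1 : |Real.sin (t / ε)| ≤ 1 := Real.abs_sin_le_one _
    calc ε * |Real.sin (t / ε)| * ‖w‖ ≤ ε * 1 * ‖w‖ := by gcongr
      _ < ε * 1 * (‖w‖ + 1) := by
        have : (0:ℝ) < ε * 1 := by linarith
        exact mul_lt_mul_of_pos_left (by linarith) this
      _ = δ := by rw [hε]; field_simp
  · have h1 : HasDerivAt (fun t : ℝ => ε * Real.sin (t / ε)) 1 0 := by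
      have := ((Real.hasDerivAt_sin (0 / ε)).comp (0:ℝ) ((hasDerivAt_id (0:ℝ)).div_const ε)).const_mul ε
      have h2 : ε * (Real.cos (0 / ε) * (1 / ε)) = 1 := by
        rw [zero_div, Real.cos_zero]; field_simp
      rw [h2] at this
      exact this
    have := (h1.smul_const w).const_add u
    simpa using this

lemma LP.contDiffAt (h : LP X φ U) {u : E} (hu : u ∈ U) : ContDiffAt ℝ (⊤ : ℕ∞) φ u :=
  h.smooth.contDiffAt (h.isOpen.mem_nhds hu)

lemma LP.hasFDerivAt (h : LP X φ U) {u : E} (hu : u ∈ U) : HasFDerivAt φ (fderiv ℝ φ u) u :=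
  ((h.contDiffAt hu).differentiableAt (by simp)).hasFDerivAt

lemma LP.curve (h : LP X φ U) {u : E} (hu : u ∈ U) (w : E) :
    ∃ c : ℝ → E, ContDiff ℝ (⊤ : ℕ∞) c ∧ (∀ t, c t ∈ U) ∧ c 0 = u ∧ HasDerivAt c w 0 ∧
      ContDiff ℝ (⊤ : ℕ∞) (fun t => φ (c t)) ∧ HasDerivAt (fun t => φ (c t)) (fderiv ℝ φ u w) 0 := by
  obtain ⟨c, hc, hcU, hc0, hcd⟩ := exists_small_curve h.isOpen hu w
  refine ⟨c, hc, hcU, hc0, hcd, ?_, ?_⟩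
  · exact contDiff_iff_contDiffAt.2 fun t => (h.contDiffAt (hcU t)).comp t hc.contDiffAt
  · have := h.hasFDerivAt hu
    rw [← hc0] at this
    have := this.comp_hasDerivAt (0:ℝ) hcd
    rwa [hc0] at this

/-- Derivatives of functions along curves in `X`, computed in a chart. -/
lemma LP.deriv_along (h : LP X φ U) {u : E} (hu : u ∈ U) {c : ℝ → Fd D} {v : Fd D} {t0 : ℝ}
    (hc : HasDerivAt c v t0) (hcX : ∀ᶠ t in 𝓝 t0, c t ∈ X) (hc0 : c t0 = φ u) :
    ∃ w : E, fderiv ℝ φ u w = v ∧ ∀ {M : Type} [NormedAddCommGroup M] [NormedSpace ℝ M]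
      (f : Fd D → M) (f' : E →L[ℝ] M), HasFDerivAt (fun u => f (φ u)) f' u →
      HasDerivAt (fun t => f (c t)) (f' w) t0 := by
  obtain ⟨ψ, hψ, hψ0, hψe⟩ := h.inv u hu
  have hψd : HasFDerivAt ψ (fderiv ℝ ψ (φ u)) (c t0) := by
    rw [hc0]; exact (hψ.differentiableAt (by simp)).hasFDerivAt
  have h1 : HasDerivAt (fun t => ψ (c t)) (fderiv ℝ ψ (φ u) v) t0 := hψd.comp_hasDerivAt t0 hc
  have hev : ∀ᶠ t in 𝓝 t0, φ (ψ (c t)) = c t := by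
    have : Tendsto c (𝓝 t0) (𝓝[X] (φ u)) := by
      refine tendsto_nhdsWithin_iff.2 ⟨?_, hcX⟩
      rw [← hc0]; exact hc.continuousAt
    exact (this.eventually hψe).mono fun t ht => ht.2
  have hval : ψ (c t0) = u := by rw [hc0, hψ0]
  have key : ∀ {M : Type} [NormedAddCommGroup M] [NormedSpace ℝ M]
      (f : Fd D → M) (f' : E →L[ℝ] M), HasFDerivAt (fun u => f (φ u)) f' u →
      HasDerivAt (fun t => f (c t)) (f' (fderiv ℝ ψ (φ u) v)) t0 := by
    intro M _ _ f f' hf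
    have hf2 : HasFDerivAt (fun u => f (φ u)) f' (ψ (c t0)) := by rwa [hval]
    have := hf2.comp_hasDerivAt t0 h1
    refine this.congr_of_eventuallyEq ?_
    filter_upwards [hev] with t ht
    simp [ht]
  refine ⟨fderiv ℝ ψ (φ u) v, ?_, key⟩
  exact (key (fun x => x) _ (h.hasFDerivAt hu)).unique hc

lemma LP.tangent (h : LP X φ U) {u : E} (hu : u ∈ U) :
    TangentAt X (φ u) = LinearMap.range (fderiv ℝ φ u : E →ₗ[ℝ] Fd D) := by
  apply le_antisymm
  · refine Submodule.span_le.2 ?_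
    rintro v ⟨c, hc, hcX, hc0, rfl⟩
    obtain ⟨w, hw, -⟩ := h.deriv_along hu (hc.differentiable (by simp) 0).hasDerivAt
      (Eventually.of_forall hcX) hc0
    exact ⟨w, hw⟩
  · rintro _ ⟨w, rfl⟩
    obtain ⟨c, hc, hcU, hc0, hcd, h1, h2⟩ := h.curve hu w
    refine Submodule.subset_span ⟨fun t => φ (c t), h1, fun t => h.maps _ (hcU t), by simp [hc0], h2.deriv⟩

lemma LP.G_contDiffAt (h : LP X φ U) {u : E} (hu : u ∈ U) :
    ContDiffAt ℝ (⊤ : ℕ∞) (fun u => Gp X (φ u)) u := by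
  have h1 : ContDiffAt ℝ (⊤ : ℕ∞) (fun u => fderiv ℝ φ u) u :=
    (h.contDiffAt hu).fderiv_right (by simp)
  have hU : ∀ᶠ u' in 𝓝 u, u' ∈ U := h.isOpen.mem_nhds hu
  have h2 := starProjection_contDiffAt (fun u => fderiv ℝ φ u) h1 (hU.mono fun u' hu' => h.inj u' hu')
  refine h2.congr_of_eventuallyEq ?_
  filter_upwards [hU] with u' hu'
  simp only [Gp]
  congr 1
  exact h.tangent hu'

lemma LP.G_hasFDerivAt (h : LP X φ U) {u : E} (hu : u ∈ U) :
    HasFDerivAt (fun u => Gp X (φ u)) (fderiv ℝ (fun u => Gp X (φ u)) u) u :=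
  ((h.G_contDiffAt hu).differentiableAt (by simp)).hasFDerivAt

end lp

/-- The (euclidean) nullity space of `X` at `x`, via the Gauss map. -/
def NS {D : ℕ} (X : Set (Fd D)) (x : Fd D) : Submodule ℝ (Fd D) where
  carrier := {v | v ∈ TangentAt X x ∧ ∀ c : ℝ → Fd D, ContDiff ℝ (⊤ : ℕ∞) c → (∀ t, c t ∈ X) →
    c 0 = x → (deriv (fun t => Gp X (c t)) 0) v = 0}
  add_mem' := by
    rintro a b ⟨ha, ha'⟩ ⟨hb, hb'⟩
    exact ⟨add_mem ha hb, fun c h1 h2 h3 => by rw [map_add, ha' c h1 h2 h3, hb' c h1 h2 h3, add_zero]⟩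
  zero_mem' := ⟨zero_mem _, fun c _ _ _ => map_zero _⟩
  smul_mem' := by
    rintro r a ⟨ha, ha'⟩
    exact ⟨Submodule.smul_mem _ _ ha, fun c h1 h2 h3 => by rw [map_smul, ha' c h1 h2 h3, smul_zero]⟩

section lp
set_option linter.unusedSectionVars false
variable {D : ℕ} {E : Type*} [NormedAddCommGroup E] [NormedSpace ℝ E] [FiniteDimensional ℝ E]
variable {X : Set (Fd D)} {φ : E → Fd D} {U : Set E}

lemma LP.mem_NS (h : LP X φ U) {u : E} (hu : u ∈ U) {v : Fd D} :
    v ∈ NS X (φ u) ↔ v ∈ TangentAt X (φ u) ∧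
      ∀ w, fderiv ℝ (fun u => Gp X (φ u)) u w v = 0 := by
  constructor
  · rintro ⟨hv, hv'⟩
    refine ⟨hv, fun w => ?_⟩
    obtain ⟨c, hc, hcU, hc0, hcd, h1, h2⟩ := h.curve hu w
    have h3 := hv' (fun t => φ (c t)) h1 (fun t => h.maps _ (hcU t)) (by simp [hc0])
    have h4 : HasDerivAt (fun t => Gp X (φ (c t))) (fderiv ℝ (fun u => Gp X (φ u)) u w) 0 := by
      have := h.G_hasFDerivAt hu
      rw [← hc0] at this
      have := this.comp_hasDerivAt (0:ℝ) hcd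
      rwa [hc0] at this
    rwa [h4.deriv] at h3
  · rintro ⟨hv, hv'⟩
    refine ⟨hv, fun c hc hcX hc0 => ?_⟩
    obtain ⟨w, hw, h3⟩ := h.deriv_along hu (hc.differentiable (by simp) 0).hasDerivAt
      (Eventually.of_forall hcX) hc0
    rw [(h3 (Gp X) _ (h.G_hasFDerivAt hu)).deriv]
    exact hv' w

lemma LP.G_apply_tangent (h : LP X φ U) {u : E} (hu : u ∈ U) (w : E) :
    Gp X (φ u) (fderiv ℝ φ u w) = fderiv ℝ φ u w := by
  unfold Gp
  rw [Submodule.starProjection_eq_self_iff, h.tangent hu]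
  exact ⟨w, rfl⟩

lemma LP.G_deriv_zero (h : LP X φ U) {u w : E} (hu : u ∈ U)
    (hz : ∀ v ∈ TangentAt X (φ u), fderiv ℝ (fun u => Gp X (φ u)) u w v = 0) :
    fderiv ℝ (fun u => Gp X (φ u)) u w = 0 :=
  proj_deriv_zero (fun u => TangentAt X (φ u)) (h.G_hasFDerivAt hu) hz

/-- Symmetry of the second fundamental form. -/
lemma LP.symm (h : LP X φ U) {u : E} (hu : u ∈ U) (w1 w2 : E) :
    fderiv ℝ (fun u => Gp X (φ u)) u w1 (fderiv ℝ φ u w2) =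
    fderiv ℝ (fun u => Gp X (φ u)) u w2 (fderiv ℝ φ u w1) := by
  have hφ2 : HasFDerivAt (fderiv ℝ φ) (fderiv ℝ (fderiv ℝ φ) u) u :=
    (((h.contDiffAt hu).fderiv_right (m := 1) (by norm_cast)).differentiableAt
      (by simp)).hasFDerivAt
  have hs : IsSymmSndFDerivAt ℝ φ u := (h.contDiffAt hu).isSymmSndFDerivAt (by
    rw [minSmoothness_of_isRCLikeNormedField]
    exact WithTop.coe_le_coe.2 (le_top : (2 : ℕ∞) ≤ ⊤))
  have hU : ∀ᶠ u' in 𝓝 u, u' ∈ U := h.isOpen.mem_nhds hu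
  have key : ∀ a b : E, fderiv ℝ (fun u => Gp X (φ u)) u a (fderiv ℝ φ u b) =
      fderiv ℝ (fderiv ℝ φ) u a b - Gp X (φ u) (fderiv ℝ (fderiv ℝ φ) u a b) := by
    intro a b
    have h1 : HasFDerivAt (fun u => fderiv ℝ φ u b)
        ((ContinuousLinearMap.apply ℝ (Fd D) b).comp (fderiv ℝ (fderiv ℝ φ) u)) u :=
      (ContinuousLinearMap.apply ℝ (Fd D) b).hasFDerivAt.comp u hφ2
    have h2 := (h.G_hasFDerivAt hu).clm_apply h1
    have h3 : (fun u => fderiv ℝ φ u b) =ᶠ[𝓝 u] (fun u => Gp X (φ u) (fderiv ℝ φ u b)) := by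
      filter_upwards [hU] with u' hu'
      exact (h.G_apply_tangent hu' b).symm
    have h4 := congrArg (fun l => l a) ((h2.congr_of_eventuallyEq h3).unique h1)
    simp at h4
    rw [eq_sub_iff_add_eq, add_comm]; exact h4
  rw [key, key, hs.eq w1 w2]

lemma LP.mem_NS_iff (h : LP X φ U) {u : E} (hu : u ∈ U) {v : Fd D} :
    v ∈ NS X (φ u) ↔ ∃ w, fderiv ℝ φ u w = v ∧ fderiv ℝ (fun u => Gp X (φ u)) u w = 0 := by
  rw [h.mem_NS hu]
  constructor
  · rintro ⟨hv, hv'⟩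
    rw [h.tangent hu] at hv
    obtain ⟨w, rfl⟩ := hv
    refine ⟨w, rfl, h.G_deriv_zero hu ?_⟩
    intro v hv
    rw [h.tangent hu] at hv
    obtain ⟨w2, rfl⟩ := hv
    exact (h.symm hu w w2).trans (hv' w2)
  · rintro ⟨w, rfl, hw⟩
    refine ⟨by rw [h.tangent hu]; exact ⟨w, rfl⟩, fun w2 => ?_⟩
    rw [h.symm hu, hw]; rfl

lemma LP.finrank_NS (h : LP X φ U) {u : E} (hu : u ∈ U) :
    Module.finrank ℝ (NS X (φ u)) = Module.finrank ℝ
      (LinearMap.ker (fderiv ℝ (fun u => Gp X (φ u)) u : E →ₗ[ℝ] (Fd D →L[ℝ] Fd D))) := by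
  have : NS X (φ u) = Submodule.map (fderiv ℝ φ u : E →ₗ[ℝ] Fd D)
      (LinearMap.ker (fderiv ℝ (fun u => Gp X (φ u)) u : E →ₗ[ℝ] (Fd D →L[ℝ] Fd D))) := by
    ext v
    rw [h.mem_NS_iff hu, Submodule.mem_map]
    constructor
    · rintro ⟨w, h1, h2⟩; exact ⟨w, h2, h1⟩
    · rintro ⟨w, h2, h1⟩; exact ⟨w, h1, h2⟩
  rw [this]
  exact (Submodule.equivMapOfInjective _ (h.inj u hu) _).finrank_eq.symm
end lp

lemma exists_split {E M : Type*} [NormedAddCommGroup E] [NormedSpace ℝ E] [FiniteDimensional ℝ E]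
    [NormedAddCommGroup M] [NormedSpace ℝ M] [FiniteDimensional ℝ M] (A : E →L[ℝ] M) :
    ∃ (r m : ℕ) (π : M →L[ℝ] Fd r) (ϖ : E →L[ℝ] Fd m),
      Function.Bijective (fun w => (π (A w), ϖ w)) ∧
      m = Module.finrank ℝ (LinearMap.ker (A : E →ₗ[ℝ] M)) := by
  set R := LinearMap.range (A : E →ₗ[ℝ] M) with hR
  set N := LinearMap.ker (A : E →ₗ[ℝ] M) with hN
  obtain ⟨π, hπ⟩ := LinearMap.exists_leftInverse_of_injective R.subtype (Submodule.ker_subtype _)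
  obtain ⟨ϖ, hϖ⟩ := LinearMap.exists_leftInverse_of_injective N.subtype (Submodule.ker_subtype _)
  have hπ' : ∀ x : R, π x = x := fun x => by
    simpa using congrArg (fun l => l x) hπ
  have hϖ' : ∀ x : N, ϖ x = x := fun x => by
    simpa using congrArg (fun l => l x) hϖ
  let e1 : R ≃ₗ[ℝ] Fd (Module.finrank ℝ R) := LinearEquiv.ofFinrankEq _ _ (by simp)
  let e2 : N ≃ₗ[ℝ] Fd (Module.finrank ℝ N) := LinearEquiv.ofFinrankEq _ _ (by simp)
  have hA : ∀ w, ((π (A w) : R) : M) = A w := fun w =>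
    congrArg Subtype.val (hπ' ⟨A w, ⟨w, rfl⟩⟩)
  refine ⟨_, _, LinearMap.toContinuousLinearMap (e1.toLinearMap.comp π),
    LinearMap.toContinuousLinearMap (e2.toLinearMap.comp ϖ), ⟨?_, ?_⟩, rfl⟩
  · intro w1 w2 h12
    have ha : e1 (π (A w1)) = e1 (π (A w2)) := congrArg Prod.fst h12
    have hb : e2 (ϖ w1) = e2 (ϖ w2) := congrArg Prod.snd h12
    have ha' := e1.injective ha
    have hb' := e2.injective hb
    have h1 : A (w1 - w2) = 0 := by rw [map_sub, ← hA w1, ← hA w2, ha', sub_self]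
    have h2 := hϖ' ⟨w1 - w2, h1⟩
    have h3 : ϖ (w1 - w2) = 0 := by rw [map_sub, hb', sub_self]
    rw [h3] at h2
    have := congrArg Subtype.val h2
    exact sub_eq_zero.1 this.symm
  · rintro ⟨a, z⟩
    obtain ⟨a, rfl⟩ := e1.surjective a
    obtain ⟨z, rfl⟩ := e2.surjective z
    obtain ⟨w, hw⟩ : ∃ w, A w = (a : M) := a.2
    refine ⟨w - ϖ w + z, ?_⟩
    have h1 : A (ϖ w) = 0 := (ϖ w).2
    have h2 : A z = 0 := z.2
    have h3 : A (w - ϖ w + z) = a := by rw [map_add, map_sub, h1, h2, hw]; simp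
    have h4 : ϖ (w - ϖ w + z) = z := by rw [map_add, map_sub, hϖ', hϖ']; simp
    refine Prod.ext ?_ ?_
    · change e1 (π (A (w - ϖ w + z))) = e1 a
      rw [h3, hπ']
    · change e2 (ϖ (w - ϖ w + z)) = e2 z
      rw [h4]

section lp
set_option linter.unusedSectionVars false
variable {D : ℕ} {E : Type*} [NormedAddCommGroup E] [NormedSpace ℝ E] [FiniteDimensional ℝ E]
variable {X : Set (Fd D)} {φ : E → Fd D} {U : Set E}
variable {r m : ℕ} {π : (Fd D →L[ℝ] Fd D) →L[ℝ] Fd r} {P : Fd D →L[ℝ] Fd m}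

/-- The adapted chart. -/
def adh (X : Set (Fd D)) (φ : E → Fd D) (π : (Fd D →L[ℝ] Fd D) →L[ℝ] Fd r) (P : Fd D →L[ℝ] Fd m)
    (u : E) : Fd r × Fd m := (π (Gp X (φ u)), P (φ u))

lemma LP.adh_contDiffOn (h : LP X φ U) : ContDiffOn ℝ (⊤ : ℕ∞) (adh X φ π P) U := by
  intro u hu
  refine ContDiffAt.contDiffWithinAt ?_
  exact (π.contDiff.contDiffAt.comp u (h.G_contDiffAt hu)).prodMk
    (P.contDiff.contDiffAt.comp u (h.contDiffAt hu))

lemma LP.adh_fderiv (h : LP X φ U) {u : E} (hu : u ∈ U) (w : E) :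
    fderiv ℝ (adh X φ π P) u w =
      (π (fderiv ℝ (fun u => Gp X (φ u)) u w), P (fderiv ℝ φ u w)) := by
  have : HasFDerivAt (adh X φ π P) ((π.comp (fderiv ℝ (fun u => Gp X (φ u)) u)).prod
      (P.comp (fderiv ℝ φ u))) u :=
    (π.hasFDerivAt.comp u (h.G_hasFDerivAt hu)).prodMk (P.hasFDerivAt.comp u (h.hasFDerivAt hu))
  rw [this.fderiv]; rfl

lemma LP.setup (h : LP X φ U) {u0 : E} (hu0 : u0 ∈ U) :
    ∃ (r m : ℕ) (π : (Fd D →L[ℝ] Fd D) →L[ℝ] Fd r) (P : Fd D →L[ℝ] Fd m),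
      Function.Bijective (fderiv ℝ (adh X φ π P) u0) ∧
      m = Module.finrank ℝ (NS X (φ u0)) := by
  obtain ⟨r, m, π, ϖ, hb, hm⟩ := exists_split (fderiv ℝ (fun u => Gp X (φ u)) u0)
  obtain ⟨L, hL⟩ := LinearMap.exists_leftInverse_of_injective
    (fderiv ℝ φ u0 : E →ₗ[ℝ] Fd D) (LinearMap.ker_eq_bot.2 (h.inj u0 hu0))
  have hL' : ∀ w, L (fderiv ℝ φ u0 w) = w := fun w => by
    simpa using congrArg (fun l => l w) hL
  refine ⟨r, m, π, ϖ.comp (LinearMap.toContinuousLinearMap L), ?_, by rw [hm, h.finrank_NS hu0]⟩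
  convert hb using 1
  funext w
  rw [h.adh_fderiv hu0]
  simp [hL']

lemma LP.key (h : LP X φ U) {u : E} (hu : u ∈ U)
    (hb : Function.Bijective (fderiv ℝ (adh X φ π P) u))
    (hmin : m ≤ Module.finrank ℝ (NS X (φ u))) {w : E}
    (hw : π (fderiv ℝ (fun u => Gp X (φ u)) u w) = 0) :
    fderiv ℝ (fun u => Gp X (φ u)) u w = 0 := by
  set A := fderiv ℝ (fun u => Gp X (φ u)) u with hA
  let N1 := LinearMap.ker (A : E →ₗ[ℝ] (Fd D →L[ℝ] Fd D))
  let N2 := LinearMap.ker ((π.comp A : E →L[ℝ] Fd r) : E →ₗ[ℝ] Fd r)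
  have hle : N1 ≤ N2 := by
    intro x hx
    have hx' : A x = 0 := hx
    change π (A x) = 0
    rw [hx', map_zero]
  have hfin : Module.finrank ℝ N2 ≤ Module.finrank ℝ N1 := by
    rw [h.finrank_NS hu] at hmin
    refine le_trans ?_ hmin
    rw [← finrank_euclideanSpace_fin (𝕜 := ℝ) (n := m)]
    let f : N2 →ₗ[ℝ] Fd m := ((P.comp (fderiv ℝ φ u) : E →L[ℝ] Fd m) : E →ₗ[ℝ] Fd m).comp N2.subtype
    apply LinearMap.finrank_le_finrank_of_injective (f := f)
    rw [injective_iff_map_eq_zero]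
    intro x hx
    have h1 : fderiv ℝ (adh X φ π P) u (x : E) = 0 := by
      rw [h.adh_fderiv hu]
      exact Prod.ext x.2 hx
    have : (x : E) = 0 := hb.1 (by rw [h1, map_zero])
    exact Subtype.ext this
  have heq := Submodule.eq_of_le_of_finrank_le hle hfin
  have : w ∈ N1 := by rw [heq]; exact hw
  exact this

end lp

section lp
set_option linter.unusedSectionVars false
variable {D : ℕ} {E : Type*} [NormedAddCommGroup E] [NormedSpace ℝ E] [FiniteDimensional ℝ E]
variable {X : Set (Fd D)} {φ : E → Fd D} {U : Set E}

/-- Data of an adapted chart. -/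
structure AdCh (X : Set (Fd D)) (φ : E → Fd D) (U : Set E) {r m : ℕ}
    (π : (Fd D →L[ℝ] Fd D) →L[ℝ] Fd r) (P : Fd D →L[ℝ] Fd m) (κ : Fd r × Fd m → E)
    (p : Fd r × Fd m) : Prop where
  mem : κ p ∈ U
  right : adh X φ π P (κ p) = p
  smooth : ContDiffAt ℝ (⊤ : ℕ∞) κ p
  bij : Function.Bijective (fderiv ℝ (adh X φ π P) (κ p))
  key : ∀ w, π (fderiv ℝ (fun u => Gp X (φ u)) (κ p) w) = 0 →
    fderiv ℝ (fun u => Gp X (φ u)) (κ p) w = 0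

lemma LP.chart (h : LP X φ U) {u0 : E} (hu0 : u0 ∈ U)
    (hmin : ∀ x ∈ X, Module.finrank ℝ (NS X (φ u0)) ≤ Module.finrank ℝ (NS X x)) :
    ∃ (r m : ℕ) (π : (Fd D →L[ℝ] Fd D) →L[ℝ] Fd r) (P : Fd D →L[ℝ] Fd m) (κ : Fd r × Fd m → E)
      (ε : ℝ), 0 < ε ∧ (∀ p ∈ Metric.ball (adh X φ π P u0) ε, AdCh X φ U π P κ p) ∧
      κ (adh X φ π P u0) = u0 ∧
      (∀ᶠ u in 𝓝 u0, κ (adh X φ π P u) = u) ∧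
      (∀ᶠ x in 𝓝[X] (φ u0), ∃ p ∈ Metric.ball (adh X φ π P u0) (ε / 2), φ (κ p) = x) := by
  obtain ⟨r, m, π, P, hb, hm⟩ := h.setup hu0
  obtain ⟨κ, hκ0, hκ1, hκ2⟩ := ift_local (adh X φ π P) h.isOpen hu0 h.adh_contDiffOn hb
  obtain ⟨ε, hε, hball⟩ := Metric.eventually_nhds_iff_ball.1 hκ2
  refine ⟨r, m, π, P, κ, ε, hε, ?_, hκ0, hκ1, ?_⟩
  · intro p hp
    obtain ⟨h1, h2, h3, h4⟩ := hball p hp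
    refine ⟨h1, h2, h3, h4, fun w hw => h.key h1 h4 ?_ hw⟩
    rw [hm]; exact hmin _ (h.maps _ h1)
  · obtain ⟨ψ, hψ, hψ0, hψe⟩ := h.inv u0 hu0
    have hcont : Tendsto ψ (𝓝[X] (φ u0)) (𝓝 u0) := by
      have := hψ.continuousAt.tendsto
      rw [hψ0] at this
      exact this.mono_left nhdsWithin_le_nhds
    have hcont2 : ContinuousAt (adh X φ π P) u0 :=
      (h.adh_contDiffOn.continuousOn).continuousAt (h.isOpen.mem_nhds hu0)
    have e1 : ∀ᶠ u in 𝓝 u0, adh X φ π P u ∈ Metric.ball (adh X φ π P u0) (ε / 2) :=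
      hcont2.eventually (Metric.ball_mem_nhds _ (half_pos hε))
    filter_upwards [hψe, hcont.eventually hκ1, hcont.eventually e1] with x hx1 hx2 hx3
    exact ⟨_, hx3, by rw [hx2, hx1.2]⟩

variable {r m : ℕ} {π : (Fd D →L[ℝ] Fd D) →L[ℝ] Fd r} {P : Fd D →L[ℝ] Fd m} {κ : Fd r × Fd m → E}
variable {p : Fd r × Fd m}

lemma AdCh.hasG (h : LP X φ U) (a : AdCh X φ U π P κ p) :
    HasFDerivAt (fun p => Gp X (φ (κ p)))
      ((fderiv ℝ (fun u => Gp X (φ u)) (κ p)).comp (fderiv ℝ κ p)) p :=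
  (h.G_hasFDerivAt a.mem).comp p (a.smooth.differentiableAt (by simp)).hasFDerivAt

lemma AdCh.hasΦ (h : LP X φ U) (a : AdCh X φ U π P κ p) :
    HasFDerivAt (fun p => φ (κ p)) ((fderiv ℝ φ (κ p)).comp (fderiv ℝ κ p)) p :=
  (h.hasFDerivAt a.mem).comp p (a.smooth.differentiableAt (by simp)).hasFDerivAt

lemma AdCh.dright (h : LP X φ U) (a : AdCh X φ U π P κ p)
    (hev : ∀ᶠ p' in 𝓝 p, adh X φ π P (κ p') = p') (q : Fd r × Fd m) :
    fderiv ℝ (adh X φ π P) (κ p) (fderiv ℝ κ p q) = q := by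
  have h1 : HasFDerivAt (adh X φ π P) (fderiv ℝ (adh X φ π P) (κ p)) (κ p) :=
    ((h.adh_contDiffOn.contDiffAt (h.isOpen.mem_nhds a.mem)).differentiableAt (by simp)).hasFDerivAt
  have h2 := h1.comp p (a.smooth.differentiableAt (by simp)).hasFDerivAt
  have h3 : HasFDerivAt (fun p' => p') ((fderiv ℝ (adh X φ π P) (κ p)).comp (fderiv ℝ κ p)) p :=
    h2.congr_of_eventuallyEq (hev.mono fun p' hp' => hp'.symm)
  have h4 := h3.unique (hasFDerivAt_id p)
  exact congrArg (fun l => l q) h4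

lemma AdCh.inj_NS (h : LP X φ U) (a : AdCh X φ U π P κ p) {v : Fd D} (hv : v ∈ NS X (φ (κ p)))
    (hP : P v = 0) : v = 0 := by
  obtain ⟨w, rfl, hw⟩ := (h.mem_NS_iff a.mem).1 hv
  have : fderiv ℝ (adh X φ π P) (κ p) w = 0 := by
    rw [h.adh_fderiv a.mem, hw, map_zero, hP]; rfl
  have : w = 0 := a.bij.1 (by rw [this, map_zero])
  rw [this, map_zero]

/-- Smooth sections of the nullity. -/
lemma LP.nsec (h : LP X φ U) {u0 : E} (hu0 : u0 ∈ U)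
    (hmin : ∀ x ∈ X, Module.finrank ℝ (NS X (φ u0)) ≤ Module.finrank ℝ (NS X x))
    {v : Fd D} (hv : v ∈ NS X (φ u0)) :
    ∃ V : E → Fd D, DifferentiableAt ℝ V u0 ∧ V u0 = v ∧ ∀ᶠ u in 𝓝 u0, V u ∈ NS X (φ u) := by
  obtain ⟨r, m, π, P, κ, ε, hε, hA, hκ0, hκ1, -⟩ := h.chart hu0 hmin
  have hev : ∀ p ∈ Metric.ball (adh X φ π P u0) ε, ∀ᶠ p' in 𝓝 p, adh X φ π P (κ p') = p' :=
    fun p hp => Filter.eventually_of_mem (Metric.isOpen_ball.mem_nhds hp) fun p' hp' => (hA p' hp').right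
  have hp0 : adh X φ π P u0 ∈ Metric.ball (adh X φ π P u0) ε := Metric.mem_ball_self hε
  have hcd : ContDiffAt ℝ (⊤ : ℕ∞) (adh X φ π P) u0 :=
    h.adh_contDiffOn.contDiffAt (h.isOpen.mem_nhds hu0)
  refine ⟨fun u => fderiv ℝ φ u (fderiv ℝ κ (adh X φ π P u) (0, P v)), ?_, ?_, ?_⟩
  · have h1 : DifferentiableAt ℝ (fderiv ℝ φ) u0 :=
      (((h.contDiffAt hu0).fderiv_right (m := 1) (by norm_cast)).differentiableAt (by simp))
    have h2 : DifferentiableAt ℝ (fderiv ℝ κ) (adh X φ π P u0) :=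
      (((hA _ hp0).smooth.fderiv_right (m := 1) (by norm_cast)).differentiableAt (by simp))
    have h3 : DifferentiableAt ℝ (fun u => fderiv ℝ κ (adh X φ π P u)) u0 :=
      h2.comp u0 (hcd.differentiableAt (by simp))
    exact h1.clm_apply (h3.clm_apply (differentiableAt_const _))
  · obtain ⟨w, hw1, hw2⟩ := (h.mem_NS_iff hu0).1 hv
    have h1 := (hA _ hp0).dright h (hev _ hp0) (0, P v)
    rw [hκ0] at h1
    have h2 : fderiv ℝ (adh X φ π P) u0 w = (0, P v) := by
      rw [h.adh_fderiv hu0, hw2, map_zero, hw1]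
    have h3 := (hA _ hp0).bij.1
    rw [hκ0] at h3
    have h4 := h3 (h1.trans h2.symm)
    simp only [h4, hw1]
  · have e1 : ∀ᶠ u in 𝓝 u0, adh X φ π P u ∈ Metric.ball (adh X φ π P u0) ε :=
      hcd.continuousAt.eventually (Metric.ball_mem_nhds _ hε)
    filter_upwards [e1, hκ1, h.isOpen.mem_nhds hu0] with u hu1 hu2 hu3
    have a := hA _ hu1
    have h1 := a.dright h (hev _ hu1) (0, P v)
    rw [h.adh_fderiv a.mem] at h1
    have h2 := a.key _ (congrArg Prod.fst h1)
    rw [hu2] at h2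
    exact (h.mem_NS_iff hu3).2 ⟨_, rfl, h2⟩

end lp

section lp
set_option linter.unusedSectionVars false
variable {D : ℕ} {E : Type*} [NormedAddCommGroup E] [NormedSpace ℝ E] [FiniteDimensional ℝ E]
variable {X : Set (Fd D)} {φ : E → Fd D} {U : Set E}
variable {r m : ℕ} {π : (Fd D →L[ℝ] Fd D) →L[ℝ] Fd r} {P : Fd D →L[ℝ] Fd m} {κ : Fd r × Fd m → E}

lemma const_of_hasFDerivAt_zero {Z M : Type*} [NormedAddCommGroup Z] [NormedSpace ℝ Z]
    [NormedAddCommGroup M] [NormedSpace ℝ M] {f : Z → M} {z0 : Z} {ε : ℝ}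
    (hf : ∀ z ∈ Metric.ball z0 ε, HasFDerivAt f (0 : Z →L[ℝ] M) z) {z z' : Z}
    (hz : z ∈ Metric.ball z0 ε) (hz' : z' ∈ Metric.ball z0 ε) : f z = f z' := by
  refine Metric.isOpen_ball.is_const_of_fderiv_eq_zero (𝕜 := ℝ)
    (convex_ball z0 ε).isPreconnected ?_ ?_ hz hz'
  · exact fun x hx => (hf x hx).differentiableAt.differentiableWithinAt
  · exact fun x hx => (hf x hx).fderiv

lemma hasFDerivAt_slice2 {Y Z M : Type*} [NormedAddCommGroup Z] [NormedSpace ℝ Z]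
    [NormedAddCommGroup Y] [NormedSpace ℝ Y]
    [NormedAddCommGroup M] [NormedSpace ℝ M] {f : Y × Z → M} {y : Y} {z : Z} {f' : Y × Z →L[ℝ] M}
    (hf : HasFDerivAt f f' (y, z)) :
    HasFDerivAt (fun z => f (y, z)) (f'.comp (ContinuousLinearMap.inr ℝ Y Z)) z :=
  hf.comp z (hasFDerivAt_prodMk_right y z)

lemma hasFDerivAt_slice1 {Y Z M : Type*} [NormedAddCommGroup Z] [NormedSpace ℝ Z]
    [NormedAddCommGroup Y] [NormedSpace ℝ Y]
    [NormedAddCommGroup M] [NormedSpace ℝ M] {f : Y × Z → M} {y : Y} {z : Z} {f' : Y × Z →L[ℝ] M}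
    (hf : HasFDerivAt f f' (y, z)) :
    HasFDerivAt (fun y => f (y, z)) (f'.comp (ContinuousLinearMap.inl ℝ Y Z)) y :=
  hf.comp y (hasFDerivAt_prodMk_left y z)

variable {y0 : Fd r} {z0 : Fd m} {ε : ℝ}

/-- The adapted chart on a product of balls. -/
def AdB (X : Set (Fd D)) (φ : E → Fd D) (U : Set E) (π : (Fd D →L[ℝ] Fd D) →L[ℝ] Fd r)
    (P : Fd D →L[ℝ] Fd m) (κ : Fd r × Fd m → E) (y0 : Fd r) (z0 : Fd m) (ε : ℝ) : Prop :=
  ∀ y ∈ Metric.ball y0 ε, ∀ z ∈ Metric.ball z0 ε, AdCh X φ U π P κ (y, z)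

variable {y : Fd r} {z z' : Fd m}

lemma AdB.ev (hA : AdB X φ U π P κ y0 z0 ε) (hy : y ∈ Metric.ball y0 ε) (hz : z ∈ Metric.ball z0 ε) :
    ∀ᶠ p' in 𝓝 (y, z), adh X φ π P (κ p') = p' := by
  have : Metric.ball y0 ε ×ˢ Metric.ball z0 ε ∈ 𝓝 (y, z) :=
    prod_mem_nhds (Metric.isOpen_ball.mem_nhds hy) (Metric.isOpen_ball.mem_nhds hz)
  filter_upwards [this] with p' hp'
  exact (hA p'.1 hp'.1 p'.2 hp'.2).right

lemma AdB.dG (h : LP X φ U) (hA : AdB X φ U π P κ y0 z0 ε) (hy : y ∈ Metric.ball y0 ε)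
    (hz : z ∈ Metric.ball z0 ε) (ζ : Fd m) :
    fderiv ℝ (fun u => Gp X (φ u)) (κ (y, z)) (fderiv ℝ κ (y, z) (0, ζ)) = 0 := by
  have a := hA y hy z hz
  refine a.key _ ?_
  have h1 := a.dright h (hA.ev hy hz) (0, ζ)
  rw [h.adh_fderiv a.mem] at h1
  exact congrArg Prod.fst h1

lemma AdB.G_const (h : LP X φ U) (hA : AdB X φ U π P κ y0 z0 ε) (hy : y ∈ Metric.ball y0 ε)
    (hz : z ∈ Metric.ball z0 ε) (hz' : z' ∈ Metric.ball z0 ε) :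
    Gp X (φ (κ (y, z))) = Gp X (φ (κ (y, z'))) := by
  refine const_of_hasFDerivAt_zero (f := fun z => Gp X (φ (κ (y, z)))) ?_ hz hz'
  intro z hz
  have h1 := hasFDerivAt_slice2 ((hA y hy z hz).hasG h)
  convert h1 using 1
  ext1 ζ
  exact (hA.dG h hy hz ζ).symm

lemma AdB.d_fix (h : LP X φ U) (hA : AdB X φ U π P κ y0 z0 ε) (hy : y ∈ Metric.ball y0 ε)
    (hz : z ∈ Metric.ball z0 ε) (hz' : z' ∈ Metric.ball z0 ε) :
    Gp X (φ (κ (y, z0))) (φ (κ (y, z')) - φ (κ (y, z))) = φ (κ (y, z')) - φ (κ (y, z)) := by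
  have hz0 : z0 ∈ Metric.ball z0 ε := Metric.mem_ball_self (lt_of_le_of_lt dist_nonneg hz)
  set Γ := Gp X (φ (κ (y, z0))) with hΓ
  let L : Fd D →L[ℝ] Fd D := ContinuousLinearMap.id ℝ _ - Γ
  have : L (φ (κ (y, z'))) = L (φ (κ (y, z))) := by
    refine const_of_hasFDerivAt_zero (f := fun z => L (φ (κ (y, z)))) ?_ hz' hz
    intro z hz
    have h1 := hasFDerivAt_slice2 ((hA y hy z hz).hasΦ h)
    have h2 : HasFDerivAt (fun z => L (φ (κ (y, z)))) _ z := L.hasFDerivAt.comp z h1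
    refine h2.congr_fderiv (Eq.symm ?_)
    ext1 ζ
    have h3 := h.G_apply_tangent (hA y hy z hz).mem (fderiv ℝ κ (y, z) (0, ζ))
    rw [hA.G_const h hy hz hz0, ← hΓ] at h3
    change 0 = fderiv ℝ φ (κ (y, z)) (fderiv ℝ κ (y, z) (0, ζ)) -
      Γ (fderiv ℝ φ (κ (y, z)) (fderiv ℝ κ (y, z) (0, ζ)))
    rw [h3, sub_self]
  change φ (κ (y, z')) - Γ (φ (κ (y, z'))) = φ (κ (y, z)) - Γ (φ (κ (y, z))) at this
  rw [map_sub]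
  rw [sub_eq_sub_iff_sub_eq_sub] at this
  exact this.symm

/-- derivative of the Gauss map in the `y` directions is independent of `z` -/
lemma AdB.dG1 (h : LP X φ U) (hA : AdB X φ U π P κ y0 z0 ε) (hy : y ∈ Metric.ball y0 ε)
    (hz : z ∈ Metric.ball z0 ε) (q : Fd r × Fd m) :
    fderiv ℝ (fun u => Gp X (φ u)) (κ (y, z)) (fderiv ℝ κ (y, z) q) =
    fderiv ℝ (fun u => Gp X (φ u)) (κ (y, z0)) (fderiv ℝ κ (y, z0) (q.1, 0)) := by
  have hz0 : z0 ∈ Metric.ball z0 ε := Metric.mem_ball_self (lt_of_le_of_lt dist_nonneg hz)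
  have h1 := hasFDerivAt_slice1 ((hA y hy z hz).hasG h)
  have h2 := hasFDerivAt_slice1 ((hA y hy z0 hz0).hasG h)
  have h3 : (fun y => Gp X (φ (κ (y, z)))) =ᶠ[𝓝 y] (fun y => Gp X (φ (κ (y, z0)))) := by
    filter_upwards [Metric.isOpen_ball.mem_nhds hy] with y' hy'
    exact hA.G_const h hy' hz hz0
  have h4 := (h1.congr_of_eventuallyEq h3.symm).unique h2
  have h5 := congrArg (fun l => l q.1) h4
  have hq : q = (q.1, 0) + (0, q.2) := by simp
  rw [hq, map_add, map_add, hA.dG h hy hz, add_zero]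
  simpa using h5

lemma AdB.mem_NS (h : LP X φ U) (hA : AdB X φ U π P κ y0 z0 ε) (hy : y ∈ Metric.ball y0 ε)
    (hz : z ∈ Metric.ball z0 ε) (v : Fd D) :
    v ∈ NS X (φ (κ (y, z))) ↔ Gp X (φ (κ (y, z0))) v = v ∧
      ∀ η, fderiv ℝ (fun u => Gp X (φ u)) (κ (y, z0)) (fderiv ℝ κ (y, z0) (η, 0)) v = 0 := by
  have hz0 : z0 ∈ Metric.ball z0 ε := Metric.mem_ball_self (lt_of_le_of_lt dist_nonneg hz)
  have a := hA y hy z hz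
  rw [h.mem_NS a.mem, ← hA.G_const h hy hz hz0]
  unfold Gp
  rw [Submodule.starProjection_eq_self_iff]
  refine and_congr_right fun _ => ?_
  constructor
  · intro hw η
    have := hA.dG1 h hy hz (η, 0)
    unfold Gp at this
    rw [← this]
    exact hw _
  · intro hη w
    have h1 : fderiv ℝ κ (y, z) (fderiv ℝ (adh X φ π P) (κ (y, z)) w) = w :=
      a.bij.1 (a.dright h (hA.ev hy hz) _)
    have := hA.dG1 h hy hz (fderiv ℝ (adh X φ π P) (κ (y, z)) w)
    rw [h1] at this
    unfold Gp at this
    rw [this]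
    exact hη _

lemma AdB.d_mem (h : LP X φ U) (hA : AdB X φ U π P κ y0 z0 ε) (hy : y ∈ Metric.ball y0 ε)
    (hz : z ∈ Metric.ball z0 ε) (hz' : z' ∈ Metric.ball z0 ε) :
    φ (κ (y, z')) - φ (κ (y, z)) ∈ NS X (φ (κ (y, z))) := by
  have hz0 : z0 ∈ Metric.ball z0 ε := Metric.mem_ball_self (lt_of_le_of_lt dist_nonneg hz)
  rw [hA.mem_NS h hy hz]
  refine ⟨hA.d_fix h hy hz hz', fun η => ?_⟩
  have h1 := hasFDerivAt_slice1 ((hA y hy z0 hz0).hasG h)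
  have h2 := (hasFDerivAt_slice1 ((hA y hy z' hz').hasΦ h)).sub
    (hasFDerivAt_slice1 ((hA y hy z hz).hasΦ h))
  have h3 := h1.clm_apply h2
  have h4 : (fun y => φ (κ (y, z')) - φ (κ (y, z))) =ᶠ[𝓝 y]
      (fun y => Gp X (φ (κ (y, z0))) (φ (κ (y, z')) - φ (κ (y, z)))) := by
    filter_upwards [Metric.isOpen_ball.mem_nhds hy] with y' hy'
    exact (hA.d_fix h hy' hz hz').symm
  have h5 := congrArg (fun l => l η) ((h3.congr_of_eventuallyEq h4).unique h2)
  have h6 := h.G_apply_tangent (hA y hy z hz).mem (fderiv ℝ κ (y, z) (η, 0))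
  have h7 := h.G_apply_tangent (hA y hy z' hz').mem (fderiv ℝ κ (y, z') (η, 0))
  rw [hA.G_const h hy hz hz0] at h6
  rw [hA.G_const h hy hz' hz0] at h7
  simp at h5
  rw [h6, h7] at h5
  simpa using h5

lemma LP.ULL (h : LP X φ U) {u0 : E} (hu0 : u0 ∈ U)
    (hmin : ∀ x ∈ X, Module.finrank ℝ (NS X (φ u0)) ≤ Module.finrank ℝ (NS X x)) :
    ∃ δ > 0, ∀ x ∈ X, dist x (φ u0) < δ → ∀ v ∈ NS X x, ‖v‖ < δ →
      x + v ∈ X ∧ Gp X (x + v) = Gp X x ∧ NS X (x + v) = NS X x := by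
  obtain ⟨r, m, π, P, κ, ε, hε, hA, hκ0, hκ1, hκ2⟩ := h.chart hu0 hmin
  obtain ⟨⟨y0, z0⟩, hp0⟩ : ∃ p, adh X φ π P u0 = p := ⟨_, rfl⟩
  rw [hp0] at hA hκ2
  have hB : AdB X φ U π P κ y0 z0 ε := fun y hy z hz => hA _ (by
    rw [← ball_prod_same]; exact ⟨hy, hz⟩)
  obtain ⟨δ1, hδ1, hx1⟩ := Metric.mem_nhdsWithin_iff.1 hκ2
  have hPpos : 0 < ‖P‖ + 1 := by positivity
  refine ⟨min δ1 (ε / 2 / (‖P‖ + 1)), by positivity, ?_⟩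
  intro x hx hxd v hv hvn
  obtain ⟨⟨y, z⟩, hyz, rfl⟩ := hx1 ⟨lt_of_lt_of_le hxd (min_le_left _ _), hx⟩
  rw [← ball_prod_same] at hyz
  obtain ⟨hy, hz⟩ := hyz
  have hy' : y ∈ Metric.ball y0 ε := Metric.ball_subset_ball (by linarith) hy
  have hzz : z ∈ Metric.ball z0 ε := Metric.ball_subset_ball (by linarith) hz
  have hPv : ‖P v‖ < ε / 2 := by
    have h1 : ‖v‖ < ε / 2 / (‖P‖ + 1) := lt_of_lt_of_le hvn (min_le_right _ _)
    rw [lt_div_iff₀ hPpos] at h1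
    have h2 := P.le_opNorm v
    nlinarith [norm_nonneg v]
  have hz' : z + P v ∈ Metric.ball z0 ε := by
    simp only [Metric.mem_ball] at hz ⊢
    calc dist (z + P v) z0 ≤ dist (z + P v) z + dist z z0 := dist_triangle _ _ _
      _ < ε := by simp only [dist_self_add_left]; linarith
  set d := φ (κ (y, z + P v)) - φ (κ (y, z)) with hd
  have hdm : d ∈ NS X (φ (κ (y, z))) := hB.d_mem h hy' hzz hz'
  have hPd : P d = P v := by
    have h1 := congrArg Prod.snd (hB y hy' _ hz').right
    have h2 := congrArg Prod.snd (hB y hy' _ hzz).right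
    simp only [adh] at h1 h2
    rw [hd, map_sub, h1, h2]; simp
  have hvd : v = d := by
    have := (hB y hy' z hzz).inj_NS h (sub_mem hv hdm) (by rw [map_sub, hPd, sub_self])
    exact sub_eq_zero.1 this
  have hxv : φ (κ (y, z)) + v = φ (κ (y, z + P v)) :=
    eq_sub_iff_add_eq'.1 (hvd.trans hd)
  rw [hxv]
  refine ⟨h.maps _ (hB y hy' _ hz').mem, hB.G_const h hy' hz' hzz, ?_⟩
  ext w
  rw [hB.mem_NS h hy' hz', hB.mem_NS h hy' hzz]

end lp

lemma real_ind {T : ℝ} (Q : ℝ → Prop) (h0 : Q 0)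
    (hopen : ∀ t, 0 ≤ t → t ≤ T → (∀ s, 0 ≤ s → s ≤ t → Q s) → ∀ᶠ s in 𝓝[>] t, Q s)
    (hclosed : ∀ t, 0 < t → t ≤ T → (∀ s, 0 ≤ s → s < t → Q s) → Q t) :
    ∀ t, 0 ≤ t → t ≤ T → Q t := by
  intro t ht htT
  set A : Set ℝ := {t | ∀ s, 0 ≤ s → s ≤ t → Q s} with hA
  have hcl : IsClosed (A ∩ Icc 0 T) := by
    rw [← closure_subset_iff_isClosed]
    intro t ht
    have htI : t ∈ Icc 0 T := by
      have := closure_mono (inter_subset_right : A ∩ Icc 0 T ⊆ Icc 0 T) ht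
      rwa [isClosed_Icc.closure_eq] at this
    refine ⟨?_, htI⟩
    have hlt : ∀ s, 0 ≤ s → s < t → Q s := by
      intro s hs hst
      obtain ⟨a, ha, ha'⟩ := mem_closure_iff.1 ht (Ioi s) isOpen_Ioi hst
      exact ha'.1 s hs (le_of_lt ha)
    intro s hs hst
    rcases hst.lt_or_eq with h | h
    · exact hlt s hs h
    · subst h
      rcases hs.eq_or_lt with h | h
      · rw [← h]; exact h0
      · exact hclosed s h htI.2 hlt
  have h0A : (0 : ℝ) ∈ A := fun s hs hs' => by rw [le_antisymm hs' hs]; exact h0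
  have hsub : Icc 0 T ⊆ A := by
    refine hcl.Icc_subset_of_forall_mem_nhdsWithin h0A ?_
    rintro x ⟨hxA, hx⟩
    have h1 := hopen x hx.1 hx.2.le hxA
    obtain ⟨b, hb, hb'⟩ := (mem_nhdsGT_iff_exists_Ioo_subset).1 h1
    refine mem_nhdsGT_iff_exists_Ioo_subset.2 ⟨b, hb, ?_⟩
    intro y hy s hs hsy
    rcases le_or_gt s x with h | h
    · exact hxA s hs h
    · exact hb' ⟨h, lt_of_le_of_lt hsy hy.2⟩
  exact hsub ⟨ht, htT⟩ t ht le_rfl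

/-- `X` has charts modelled on `E`. -/
def HasLP {D : ℕ} (E : Type*) [NormedAddCommGroup E] [NormedSpace ℝ E] (X : Set (Fd D)) : Prop :=
  ∀ x ∈ X, ∃ (φ : E → Fd D) (U : Set E) (u : E), LP X φ U ∧ u ∈ U ∧ φ u = x

/-- minimality of nullity -/
def MinN {D : ℕ} (X : Set (Fd D)) (x : Fd D) : Prop :=
  ∀ y ∈ X, Module.finrank ℝ (NS X x) ≤ Module.finrank ℝ (NS X y)

section lp
set_option linter.unusedSectionVars false
variable {D : ℕ} {E : Type*} [NormedAddCommGroup E] [NormedSpace ℝ E] [FiniteDimensional ℝ E]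
variable {X : Set (Fd D)}

lemma HasLP.ULL (hX : HasLP E X) {q : Fd D} (hq : q ∈ X) (hmin : MinN X q) :
    ∃ δ > 0, ∀ x ∈ X, dist x q < δ → ∀ v ∈ NS X x, ‖v‖ < δ →
      x + v ∈ X ∧ Gp X (x + v) = Gp X x ∧ NS X (x + v) = NS X x := by
  obtain ⟨φ, U, u, h, hu, rfl⟩ := hX q hq
  exact h.ULL hu hmin

/-- The closing step: the rank of the Gauss map does not drop at the end. -/
lemma HasLP.close (hX : HasLP E X) {q v : Fd D} (hq : q ∈ X) (hmin : MinN X q) (hv : v ∈ NS X q)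
    {a b : ℝ → ℝ} (ha : Continuous a) (hb : Continuous b) (ha0 : a 0 = 1) (hb0 : b 0 = 0)
    (hab : ∀ x ∈ X, ∀ t t', (a t - a t') • x ∈ NS X x)
    {t1 : ℝ} (ht1 : 0 < t1) (hc : a t1 • q + b t1 • v ∈ X)
    (hcX : ∀ t, 0 ≤ t → t < t1 → a t • q + b t • v ∈ X)
    (hN : ∀ t, 0 ≤ t → t < t1 → NS X (a t • q + b t • v) = NS X q) :
    MinN X (a t1 • q + b t1 • v) := by
  obtain ⟨φ, U, u0, h, hu0, rfl⟩ := hX q hq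
  obtain ⟨φ1, U1, u1, h1, hu1, hφ1⟩ := hX _ hc
  obtain ⟨V, hVd, hV0, hVN⟩ := h.nsec hu0 hmin hv
  obtain ⟨ψ, hψ, hψ0, hψe⟩ := h1.inv u1 hu1
  set A0 := fderiv ℝ (fun u => Gp X (φ u)) u0 with hA0
  set A1 := fderiv ℝ (fun u => Gp X (φ1 u)) u1 with hA1
  suffices hr : LinearMap.range (A0 : E →ₗ[ℝ] (Fd D →L[ℝ] Fd D)) ≤
      LinearMap.range (A1 : E →ₗ[ℝ] (Fd D →L[ℝ] Fd D)) by
    have e1 := LinearMap.finrank_range_add_finrank_ker (A0 : E →ₗ[ℝ] (Fd D →L[ℝ] Fd D))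
    have e2 := LinearMap.finrank_range_add_finrank_ker (A1 : E →ₗ[ℝ] (Fd D →L[ℝ] Fd D))
    have e3 := Submodule.finrank_mono hr
    have e4 := h.finrank_NS hu0
    have e5 := h1.finrank_NS hu1
    intro y hy
    refine le_trans ?_ (hmin y hy)
    rw [← hφ1, e5, e4, ← hA0, ← hA1]
    omega
  rintro _ ⟨w, rfl⟩
  have hlin : HasDerivAt (fun s : ℝ => u0 + s • w) w 0 := by
    simpa using ((hasDerivAt_id (0:ℝ)).smul_const w).const_add u0
  have hlin0 : Tendsto (fun s : ℝ => u0 + s • w) (𝓝 0) (𝓝 u0) := by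
    have := hlin.continuousAt.tendsto
    simpa using this
  have hxd : HasDerivAt (fun s : ℝ => φ (u0 + s • w)) (fderiv ℝ φ u0 w) 0 := by
    have : HasFDerivAt φ (fderiv ℝ φ u0) (u0 + (0:ℝ) • w) := by simpa using h.hasFDerivAt hu0
    exact this.comp_hasDerivAt (0:ℝ) hlin
  have hVd' : HasDerivAt (fun s : ℝ => V (u0 + s • w)) (fderiv ℝ V u0 w) 0 := by
    have : HasFDerivAt V (fderiv ℝ V u0) (u0 + (0:ℝ) • w) := by simpa using hVd.hasFDerivAt
    exact this.comp_hasDerivAt (0:ℝ) hlin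
  have hGd : HasDerivAt (fun s : ℝ => Gp X (φ (u0 + s • w))) (A0 w) 0 := by
    have : HasFDerivAt (fun u => Gp X (φ u)) A0 (u0 + (0:ℝ) • w) := by
      simpa using h.G_hasFDerivAt hu0
    exact this.comp_hasDerivAt (0:ℝ) hlin
  set x : ℝ → Fd D := fun s => φ (u0 + s • w) with hx
  set Vs : ℝ → Fd D := fun s => V (u0 + s • w) with hVs
  have hx0 : x 0 = φ u0 := by simp [hx]
  have hVs0 : Vs 0 = v := by simp [hVs, hV0]
  have hxX : ∀ᶠ s in 𝓝 (0:ℝ), x s ∈ X :=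
    (hlin0.eventually (h.isOpen.mem_nhds hu0)).mono fun s hs => h.maps _ hs
  have hVsN : ∀ᶠ s in 𝓝 (0:ℝ), Vs s ∈ NS X (x s) := hlin0.eventually hVN
  set F : ℝ → ℝ → Fd D := fun s t => a t • x s + b t • Vs s with hF
  have hF0 : ∀ t, F 0 t = a t • φ u0 + b t • v := fun t => by simp only [hF, hx0, hVs0]
  have hFc : ∀ t, ContinuousAt (fun s => F s t) 0 := fun t =>
    (hxd.continuousAt.const_smul (a t)).add (hVd'.continuousAt.const_smul (b t))
  let Good : ℝ → Prop := fun t => ∀ᶠ s in 𝓝 (0:ℝ), F s t ∈ X ∧ Gp X (F s t) = Gp X (x s) ∧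
    NS X (F s t) = NS X (x s)
  have hcc : Continuous (fun t => F 0 t) := by
    simp only [hF]; fun_prop
  have hloc : ∀ t, 0 ≤ t → t < t1 → ∀ᶠ t' in 𝓝 t, ∀ᶠ t'' in 𝓝 t, Good t' → Good t'' := by
    intro t ht0 htt
    have hmt : MinN X (F 0 t) := by
      intro y hy
      rw [hF0, hN t ht0 htt]; exact hmin y hy
    obtain ⟨δ, hδ, hU⟩ := hX.ULL (by rw [hF0]; exact hcX t ht0 htt) hmt
    have hnear : ∀ᶠ t' in 𝓝 t, dist (F 0 t') (F 0 t) < δ / 2 :=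
      hcc.continuousAt.eventually (Metric.ball_mem_nhds _ (half_pos hδ))
    filter_upwards [hnear] with t' ht'
    filter_upwards [hnear] with t'' ht'' hG
    have e1 : ∀ᶠ s in 𝓝 (0:ℝ), dist (F s t') (F 0 t) < δ :=
      (hFc t').eventually (Metric.isOpen_ball.mem_nhds
        (Metric.mem_ball.2 (ht'.trans (half_lt_self hδ))))
    have e2 : ∀ᶠ s in 𝓝 (0:ℝ), ‖F s t'' - F s t'‖ < δ := by
      have h3 : ContinuousAt (fun s => ‖F s t'' - F s t'‖) 0 := ((hFc t'').sub (hFc t')).norm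
      refine h3.eventually (gt_mem_nhds ?_)
      change ‖F 0 t'' - F 0 t'‖ < δ
      rw [← dist_eq_norm]
      calc dist (F 0 t'') (F 0 t') ≤ dist (F 0 t'') (F 0 t) + dist (F 0 t') (F 0 t) :=
            dist_triangle_right _ _ _
        _ < δ := by linarith
    filter_upwards [hG, e1, e2, hxX, hVsN] with s ⟨g1, g2, g3⟩ hs1 hs2 hs3 hs4
    have hm : F s t'' - F s t' ∈ NS X (F s t') := by
      rw [g3]
      have : F s t'' - F s t' = (a t'' - a t') • x s + (b t'' - b t') • Vs s := by
        simp only [hF, sub_smul]; abel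
      rw [this]
      exact add_mem (hab _ hs3 _ _) (Submodule.smul_mem _ _ hs4)
    have := hU _ g1 hs1 _ hm hs2
    rw [add_sub_cancel] at this
    exact ⟨this.1, this.2.1.trans g2, this.2.2.trans g3⟩
  have hgood : ∀ t, 0 ≤ t → t < t1 → Good t := by
    intro t ht0 htt
    refine real_ind (T := t) Good ?_ ?_ ?_ t ht0 le_rfl
    · filter_upwards [hxX] with s hs
      have : F s 0 = x s := by simp [hF, ha0, hb0]
      rw [this]; exact ⟨hs, rfl, rfl⟩
    · intro t' ht' htt' hQ
      have h3 := (hloc t' ht' (lt_of_le_of_lt htt' htt)).self_of_nhds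
      exact (h3.filter_mono nhdsWithin_le_nhds).mono fun s hs => hs (hQ t' ht' le_rfl)
    · intro t' ht' htt' hQ
      have h3 := hloc t' ht'.le (lt_of_le_of_lt htt' htt)
      have h4 : ∀ᶠ s in 𝓝[<] t', Good s → Good t' :=
        (h3.filter_mono nhdsWithin_le_nhds).mono fun s hs => hs.self_of_nhds
      have h5 : ∀ᶠ s in 𝓝[<] t', Good s := by
        filter_upwards [Ioo_mem_nhdsLT ht'] with s hs
        exact hQ s hs.1.le hs.2
      obtain ⟨s, hs⟩ := (h4.and h5).exists
      exact hs.1 hs.2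
  -- the limit
  set Gt : Fd D → (Fd D →L[ℝ] Fd D) := fun y => Gp X (φ1 (ψ y)) with hGt
  have hGt1 : ContDiffAt ℝ (⊤ : ℕ∞) Gt (φ1 u1) := by
    have h3 : ContDiffAt ℝ (⊤ : ℕ∞) (fun u => Gp X (φ1 u)) (ψ (φ1 u1)) := by
      rw [hψ0]; exact h1.G_contDiffAt hu1
    exact h3.comp _ hψ
  have hGtd : ∀ᶠ y in 𝓝 (φ1 u1), DifferentiableAt ℝ Gt y := by
    have h3 : ContDiffAt ℝ 1 Gt (φ1 u1) := hGt1.of_le (by exact_mod_cast le_top)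
    exact (h3.eventually (by simp)).mono fun y hy => hy.differentiableAt (by simp)
  have hGtc : ContinuousAt (fderiv ℝ Gt) (φ1 u1) :=
    (hGt1.fderiv_right (m := 0) (by simp)).continuousAt
  have hψe' : ∀ᶠ y in 𝓝 (φ1 u1), y ∈ X → φ1 (ψ y) = y := by
    rw [eventually_nhdsWithin_iff] at hψe
    exact hψe.mono fun y hy hyX => (hy hyX).2
  set J : ℝ → Fd D := fun t => a t • fderiv ℝ φ u0 w + b t • fderiv ℝ V u0 w with hJ
  have hct : Tendsto (fun t => F 0 t) (𝓝 t1) (𝓝 (φ1 u1)) := by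
    rw [hφ1, ← hF0]; exact hcc.continuousAt
  have hev : ∀ᶠ t in 𝓝[<] t1, fderiv ℝ Gt (F 0 t) (J t) = A0 w := by
    have h3 : ∀ᶠ t in 𝓝[<] t1, DifferentiableAt ℝ Gt (F 0 t) :=
      (hct.eventually hGtd).filter_mono nhdsWithin_le_nhds
    have h4 : ∀ᶠ t in 𝓝[<] t1, ∀ᶠ y in 𝓝 (F 0 t), y ∈ X → φ1 (ψ y) = y :=
      (hct.eventually (eventually_eventually_nhds.2 hψe')).filter_mono nhdsWithin_le_nhds
    filter_upwards [h3, h4, Ioo_mem_nhdsLT ht1] with t ht3 ht4 ht5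
    have hFd : HasDerivAt (fun s => F s t) (J t) 0 :=
      (hxd.const_smul (a t)).add (hVd'.const_smul (b t))
    have h5 : HasDerivAt (fun s => Gt (F s t)) (fderiv ℝ Gt (F 0 t) (J t)) 0 :=
      HasFDerivAt.comp_hasDerivAt (f := fun s => F s t) (0:ℝ) ht3.hasFDerivAt hFd
    refine h5.unique (hGd.congr_of_eventuallyEq ?_)
    filter_upwards [hgood t ht5.1.le ht5.2, (hFc t).eventually ht4] with s hs1 hs2
    simp only [hGt]
    rw [hs2 hs1.1, hs1.2.1]
  have hlim : Tendsto (fun t => fderiv ℝ Gt (F 0 t) (J t)) (𝓝[<] t1)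
      (𝓝 (fderiv ℝ Gt (φ1 u1) (J t1))) := by
    have h3 : Tendsto (fun t => fderiv ℝ Gt (F 0 t)) (𝓝 t1) (𝓝 (fderiv ℝ Gt (φ1 u1))) :=
      hGtc.tendsto.comp hct
    have h4 : Tendsto J (𝓝 t1) (𝓝 (J t1)) := by
      have : Continuous J := by simp only [hJ]; fun_prop
      exact this.continuousAt
    have h5 := (isBoundedBilinearMap_apply (𝕜 := ℝ) (E := Fd D) (F := Fd D →L[ℝ] Fd D)).continuous.tendsto
      (fderiv ℝ Gt (φ1 u1), J t1)
    exact (h5.comp (h3.prodMk_nhds h4)).mono_left nhdsWithin_le_nhds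
  have hfin : fderiv ℝ Gt (φ1 u1) (J t1) = A0 w :=
    tendsto_nhds_unique hlim (tendsto_const_nhds.congr' (hev.mono fun t ht => ht.symm))
  have hcomp : fderiv ℝ Gt (φ1 u1) = A1.comp (fderiv ℝ ψ (φ1 u1)) := by
    have h3 : HasFDerivAt (fun u => Gp X (φ1 u)) A1 (ψ (φ1 u1)) := by
      rw [hψ0]; exact h1.G_hasFDerivAt hu1
    exact (h3.comp (φ1 u1) (hψ.differentiableAt (by simp)).hasFDerivAt).fderiv
  rw [hcomp] at hfin
  exact ⟨fderiv ℝ ψ (φ1 u1) (J t1), hfin⟩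

lemma HasLP.line_local (hX : HasLP E X) {q v : Fd D} (hv : v ∈ NS X q)
    (hq : q ∈ X)
    {a b : ℝ → ℝ} (ha : Continuous a) (hb : Continuous b)
    (hab : ∀ x ∈ X, ∀ t t', (a t - a t') • x ∈ NS X x)
    {t : ℝ} (hc : a t • q + b t • v ∈ X) (hmin : MinN X (a t • q + b t • v)) :
    ∀ᶠ t' in 𝓝 t, ∀ᶠ t'' in 𝓝 t, a t' • q + b t' • v ∈ X ∧ Gp X (a t' • q + b t' • v) = Gp X q ∧
      NS X (a t' • q + b t' • v) = NS X q →
      a t'' • q + b t'' • v ∈ X ∧ Gp X (a t'' • q + b t'' • v) = Gp X q ∧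
      NS X (a t'' • q + b t'' • v) = NS X q := by
  obtain ⟨δ, hδ, hU⟩ := hX.ULL hc hmin
  set F : ℝ → Fd D := fun t => a t • q + b t • v with hF
  have hcc : Continuous F := by simp only [hF]; fun_prop
  have hnear : ∀ᶠ t' in 𝓝 t, dist (F t') (F t) < δ / 2 :=
    hcc.continuousAt.eventually (Metric.ball_mem_nhds _ (half_pos hδ))
  filter_upwards [hnear] with t' ht'
  filter_upwards [hnear] with t'' ht'' ⟨g1, g2, g3⟩
  have e2 : ‖F t'' - F t'‖ < δ := by
    rw [← dist_eq_norm]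
    calc dist (F t'') (F t') ≤ dist (F t'') (F t) + dist (F t') (F t) :=
          dist_triangle_right _ _ _
      _ < δ := by linarith
  have hm : F t'' - F t' ∈ NS X (F t') := by
    rw [g3]
    have : F t'' - F t' = (a t'' - a t') • q + (b t'' - b t') • v := by
      simp only [hF, sub_smul]; abel
    rw [this]
    exact add_mem (hab _ hq _ _) (Submodule.smul_mem _ _ hv)
  have := hU _ g1 (ht'.trans (half_lt_self hδ)) _ hm e2
  rw [add_sub_cancel] at this
  exact ⟨this.1, this.2.1.trans g2, this.2.2.trans g3⟩

lemma HasLP.line_main (hX : HasLP E X) {q v : Fd D} (hq : q ∈ X) (hmin : MinN X q)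
    (hv : v ∈ NS X q)
    {a b : ℝ → ℝ} (ha : Continuous a) (hb : Continuous b) (ha0 : a 0 = 1) (hb0 : b 0 = 0)
    (hab : ∀ x ∈ X, ∀ t t', (a t - a t') • x ∈ NS X x)
    {T : ℝ} (hcX : ∀ t, 0 ≤ t → t ≤ T → a t • q + b t • v ∈ X) :
    ∀ t, 0 ≤ t → t ≤ T → Gp X (a t • q + b t • v) = Gp X q ∧
      NS X (a t • q + b t • v) = NS X q := by
  refine real_ind _ ?_ ?_ ?_
  · simp [ha0, hb0]
  · intro t ht htT hQ
    have hm : MinN X (a t • q + b t • v) := by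
      intro y hy
      rw [(hQ t ht le_rfl).2]; exact hmin y hy
    have h1 := (hX.line_local hv hq ha hb hab (hcX t ht htT) hm).self_of_nhds
    exact (h1.filter_mono nhdsWithin_le_nhds).mono fun s hs =>
      (hs ⟨hcX t ht htT, hQ t ht le_rfl⟩).2
  · intro t ht htT hQ
    have hm : MinN X (a t • q + b t • v) :=
      hX.close hq hmin hv ha hb ha0 hb0 hab ht (hcX t ht.le htT)
        (fun s hs hst => hcX s hs (hst.le.trans htT)) (fun s hs hst => (hQ s hs hst).2)
    have h1 := (hX.line_local hv hq ha hb hab (hcX t ht.le htT) hm)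
    have h4 := (h1.filter_mono (nhdsWithin_le_nhds (s := Iio t))).mono
      fun s hs => hs.self_of_nhds
    obtain ⟨s, hs, hs'⟩ := (h4.and (Ioo_mem_nhdsLT ht)).exists
    exact (hs ⟨hcX s hs'.1.le (hs'.2.le.trans htT), hQ s hs'.1.le hs'.2⟩).2

end lp

lemma lp_of_param {D n : ℕ} {S : Set (Fd D)} {φ : Fd n → Fd D} {U : Set (Fd n)} {p : Fd D}
    (h : IsLocalParam S n φ U p) : LP S φ U := by
  have hinj : ∀ u ∈ U, Function.Injective (fderiv ℝ φ u) := by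
    intro u hu
    have := h.immersion u hu
    rwa [fderivWithin_of_isOpen h.isOpen hu] at this
  obtain ⟨V, hV, hUV⟩ := h.openImage
  refine ⟨h.isOpen, h.smooth, ?_, hinj, ?_⟩
  · intro u hu
    have : φ u ∈ S ∩ V := by rw [← hUV]; exact ⟨u, hu, rfl⟩
    exact this.1
  · intro u hu
    obtain ⟨ψ, hψ, hψ0⟩ := h.embedding
    obtain ⟨L, hL⟩ := LinearMap.exists_leftInverse_of_injective
      (fderiv ℝ φ u : Fd n →ₗ[ℝ] Fd D) (LinearMap.ker_eq_bot.2 (hinj u hu))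
    set L' : Fd D →L[ℝ] Fd n := LinearMap.toContinuousLinearMap L with hL'
    have hLw : ∀ w, L' (fderiv ℝ φ u w) = w := fun w =>
      congrArg (fun l : Fd n →ₗ[ℝ] Fd n => l w) hL
    have hd : HasFDerivAt (fun u => L' (φ u)) (L'.comp (fderiv ℝ φ u)) u :=
      L'.hasFDerivAt.comp u
        ((h.smooth.contDiffAt (h.isOpen.mem_nhds hu)).differentiableAt (by simp)).hasFDerivAt
    have hbij : Function.Bijective (fderiv ℝ (fun u => L' (φ u)) u) := by
      rw [hd.fderiv]
      have : (⇑(L'.comp (fderiv ℝ φ u)) : Fd n → Fd n) = id := by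
        funext w; exact hLw w
      rw [this]; exact Function.bijective_id
    obtain ⟨κ, hκ0, hκ1, hκ2⟩ := ift_local (fun u => L' (φ u)) h.isOpen hu
      (L'.contDiff.comp_contDiffOn h.smooth) hbij
    refine ⟨fun x => κ (L' x), ?_, hκ0, ?_⟩
    · exact (hκ2.self_of_nhds.2.2.1).comp (φ u) L'.contDiff.contDiffAt
    · have hmem : φ u ∈ φ '' U := ⟨u, hu, rfl⟩
      have hfil : 𝓝[S] (φ u) = 𝓝[φ '' U] (φ u) := by
        rw [hUV] at hmem ⊢
        exact (nhdsWithin_inter_of_mem' (mem_nhdsWithin_of_mem_nhds (hV.mem_nhds hmem.2))).symm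
      rw [hfil]
      have ht : Tendsto ψ (𝓝[φ '' U] (φ u)) (𝓝 u) := by
        have := (hψ (φ u) hmem).tendsto
        rwa [hψ0 u hu] at this
      filter_upwards [ht.eventually hκ1, self_mem_nhdsWithin] with x hx1 hx2
      obtain ⟨u', hu', rfl⟩ := hx2
      rw [hψ0 u' hu'] at hx1
      rw [hx1]
      exact ⟨hu', rfl⟩

lemma hasLP_of_submanifold {D n : ℕ} {S : Set (Fd D)} (h : IsSubmanifold S n) :
    HasLP (Fd n) S := by
  intro x hx
  obtain ⟨φ, U, hφ⟩ := h x hx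
  obtain ⟨u, hu, hux⟩ := hφ.mem
  exact ⟨φ, U, u, lp_of_param hφ, hu, hux⟩

/-- The cone over `S`. -/
def Cone {D : ℕ} (S : Set (Fd D)) : Set (Fd D) := {x | ∃ ρ : ℝ, 0 < ρ ∧ ∃ y ∈ S, x = ρ • y}

section cone
set_option linter.unusedSectionVars false
variable {D : ℕ} {E : Type*} [NormedAddCommGroup E] [NormedSpace ℝ E] [FiniteDimensional ℝ E]
variable {S : Set (Fd D)} {φ : E → Fd D} {U : Set E} {m : Fd D → ℝ}

lemma cone_hasFDerivAt (h : LP S φ U) {u : E} (hu : u ∈ U) (ρ : ℝ) :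
    HasFDerivAt (fun q : E × ℝ => q.2 • φ q.1)
      (ρ • ((fderiv ℝ φ u).comp (ContinuousLinearMap.fst ℝ E ℝ)) +
        (ContinuousLinearMap.snd ℝ E ℝ).smulRight (φ u)) (u, ρ) := by
  have h1 : HasFDerivAt (fun q : E × ℝ => φ q.1)
    ((fderiv ℝ φ u).comp (ContinuousLinearMap.fst ℝ E ℝ)) (u, ρ) :=
    HasFDerivAt.comp (g := φ) (u, ρ) (h.hasFDerivAt hu) hasFDerivAt_fst
  have h2 : HasFDerivAt (fun q : E × ℝ => q.2) (ContinuousLinearMap.snd ℝ E ℝ) (u, ρ) :=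
    hasFDerivAt_snd
  exact h2.smul h1

lemma lp_cone (h : LP S φ U) (hm : ∀ ρ : ℝ, 0 < ρ → ∀ y ∈ S, m (ρ • y) = ρ)
    (hms : ∀ x ∈ Cone S, ContDiffAt ℝ (⊤ : ℕ∞) m x) :
    LP (Cone S) (fun q : E × ℝ => q.2 • φ q.1) (U ×ˢ Ioi (0:ℝ)) := by
  refine ⟨h.isOpen.prod isOpen_Ioi, ?_, ?_, ?_, ?_⟩
  · exact contDiff_snd.contDiffOn.smul (h.smooth.comp contDiff_fst.contDiffOn fun q hq => hq.1)
  · rintro ⟨u, ρ⟩ ⟨hu, hρ⟩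
    exact ⟨ρ, hρ, φ u, h.maps u hu, rfl⟩
  · rintro ⟨u, ρ⟩ ⟨hu, hρ⟩
    have hρ' : (0:ℝ) < ρ := hρ
    have hd := cone_hasFDerivAt h hu ρ
    have hmem : ρ • φ u ∈ Cone S := ⟨ρ, hρ, φ u, h.maps u hu, rfl⟩
    have hmd : HasFDerivAt m (fderiv ℝ m (ρ • φ u)) (ρ • φ u) :=
      ((hms _ hmem).differentiableAt (by simp)).hasFDerivAt
    have hcomp := HasFDerivAt.comp (g := m) (u, ρ) hmd hd
    have hev : (fun q : E × ℝ => q.2) =ᶠ[𝓝 (u, ρ)] (m ∘ fun q : E × ℝ => q.2 • φ q.1) := by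
      filter_upwards [(h.isOpen.prod isOpen_Ioi).mem_nhds ⟨hu, hρ⟩] with q hq
      exact (hm q.2 hq.2 _ (h.maps _ hq.1)).symm
    have huniq := (hcomp.congr_of_eventuallyEq hev).unique hasFDerivAt_snd
    rw [hd.fderiv]
    rw [injective_iff_map_eq_zero]
    rintro ⟨w, r⟩ hwr
    have h1 := congrArg (fun l => l (w, r)) huniq
    simp only [ContinuousLinearMap.comp_apply] at h1
    rw [hwr, map_zero] at h1
    have hr : r = 0 := h1.symm
    subst hr
    simp at hwr
    have hw : fderiv ℝ φ u w = 0 := hwr.resolve_left hρ'.ne'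
    have : w = 0 := h.inj u hu (by rw [hw, map_zero])
    rw [this]; rfl
  · rintro ⟨u, ρ⟩ ⟨hu, hρ⟩
    have hρ' : (0:ℝ) < ρ := hρ
    obtain ⟨ψ, hψ, hψ0, hψe⟩ := h.inv u hu
    have hmem : ρ • φ u ∈ Cone S := ⟨ρ, hρ, φ u, h.maps u hu, rfl⟩
    have hmv : m (ρ • φ u) = ρ := hm ρ hρ _ (h.maps u hu)
    have hval : (m (ρ • φ u))⁻¹ • (ρ • φ u) = φ u := by
      rw [hmv, smul_smul, inv_mul_cancel₀ hρ'.ne', one_smul]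
    have hns : ContDiffAt ℝ (⊤ : ℕ∞) (fun x => (m x)⁻¹ • x) (ρ • φ u) :=
      ((hms _ hmem).inv (by rw [hmv]; exact hρ'.ne')).smul contDiffAt_id
    refine ⟨fun x => (ψ ((m x)⁻¹ • x), m x), ?_, ?_, ?_⟩
    · refine ContDiffAt.prodMk ?_ (hms _ hmem)
      exact ContDiffAt.comp (g := ψ) (f := fun x => (m x)⁻¹ • x) (ρ • φ u)
        (by rw [hval]; exact hψ) hns
    · refine Prod.ext ?_ hmv
      change ψ ((m (ρ • φ u))⁻¹ • (ρ • φ u)) = u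
      rw [hval, hψ0]
    · have ht : Tendsto (fun x => (m x)⁻¹ • x) (𝓝[Cone S] (ρ • φ u)) (𝓝[S] (φ u)) := by
        refine tendsto_nhdsWithin_iff.2 ⟨?_, ?_⟩
        · have := hns.continuousAt.tendsto
          rw [hval] at this
          exact this.mono_left nhdsWithin_le_nhds
        · filter_upwards [self_mem_nhdsWithin] with x hx
          obtain ⟨ρ', hρ'', y, hy, rfl⟩ := hx
          rw [hm ρ' hρ'' y hy, smul_smul, inv_mul_cancel₀ hρ''.ne', one_smul]
          exact hy
      filter_upwards [ht.eventually hψe, self_mem_nhdsWithin] with x hx1 hx2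
      obtain ⟨ρ', hρ'', y, hy, rfl⟩ := hx2
      have hy1 : ρ'⁻¹ • ρ' • y = y := by rw [smul_smul, inv_mul_cancel₀ hρ''.ne', one_smul]
      rw [hm ρ' hρ'' y hy, hy1] at hx1 ⊢
      refine ⟨⟨hx1.1, hρ''⟩, ?_⟩
      change ρ' • φ (ψ y) = ρ' • y
      rw [hx1.2]

lemma hasLP_cone (h : HasLP E S) (hm : ∀ ρ : ℝ, 0 < ρ → ∀ y ∈ S, m (ρ • y) = ρ)
    (hms : ∀ x ∈ Cone S, ContDiffAt ℝ (⊤ : ℕ∞) m x) : HasLP (E × ℝ) (Cone S) := by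
  rintro x ⟨ρ, hρ, y, hy, rfl⟩
  obtain ⟨φ, U, u, hφ, hu, rfl⟩ := h y hy
  exact ⟨_, _, (u, ρ), lp_cone hφ hm hms, ⟨hu, hρ⟩, rfl⟩

lemma cone_sub : S ⊆ Cone S := fun x hx => ⟨1, one_pos, x, hx, by simp⟩

lemma cone_smul {x : Fd D} (hx : x ∈ Cone S) {ρ : ℝ} (hρ : 0 < ρ) : ρ • x ∈ Cone S := by
  obtain ⟨r, hr, y, hy, rfl⟩ := hx
  exact ⟨ρ * r, by positivity, y, hy, by rw [smul_smul]⟩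

/-- tangent space of the cone -/
lemma cone_tangent (h : HasLP E S) (hm : ∀ ρ : ℝ, 0 < ρ → ∀ y ∈ S, m (ρ • y) = ρ)
    (hms : ∀ x ∈ Cone S, ContDiffAt ℝ (⊤ : ℕ∞) m x) {p : Fd D} (hp : p ∈ S) :
    TangentAt (Cone S) p = TangentAt S p ⊔ Submodule.span ℝ {p} ∧
    Disjoint (TangentAt S p) (Submodule.span ℝ {p}) := by
  obtain ⟨φ, U, u, hφ, hu, rfl⟩ := h p hp
  have hc := lp_cone hφ hm hms
  have h1 := hc.tangent (u := (u, (1:ℝ))) ⟨hu, mem_Ioi.2 one_pos⟩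
  have hd := (cone_hasFDerivAt hφ hu 1).fderiv
  simp only [one_smul] at h1
  have hinj := hc.inj (u, (1:ℝ)) ⟨hu, mem_Ioi.2 one_pos⟩
  rw [hd] at hinj
  constructor
  · rw [h1, hφ.tangent hu]
    ext v
    rw [Submodule.mem_sup]
    constructor
    · rintro ⟨⟨w, r⟩, rfl⟩
      refine ⟨fderiv ℝ φ u w, ⟨w, rfl⟩, r • φ u, Submodule.smul_mem _ _ (Submodule.mem_span_singleton_self _), ?_⟩
      rw [hd]; simp
    · rintro ⟨_, ⟨w, rfl⟩, y, hy, rfl⟩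
      obtain ⟨r, rfl⟩ := Submodule.mem_span_singleton.1 hy
      refine ⟨(w, r), ?_⟩
      rw [hd]; simp
  · rw [Submodule.disjoint_def]
    intro x hx hx'
    rw [hφ.tangent hu] at hx
    obtain ⟨w, rfl⟩ := hx
    obtain ⟨r, hr⟩ := Submodule.mem_span_singleton.1 hx'
    have : ((w, -r) : E × ℝ) = 0 := hinj (by
      rw [map_zero]
      simp only [one_smul, ContinuousLinearMap.add_apply, ContinuousLinearMap.comp_apply,
        ContinuousLinearMap.smulRight_apply, ContinuousLinearMap.coe_fst',
        ContinuousLinearMap.coe_snd', neg_smul]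
      rw [hr]; simp)
    have hw : w = 0 := congrArg Prod.fst this
    rw [hw]; simp

lemma tangent_le_smul {X : Set (Fd D)} (hX : ∀ x ∈ X, ∀ ρ : ℝ, 0 < ρ → ρ • x ∈ X) {x : Fd D}
    {ρ : ℝ} (hρ : 0 < ρ) : TangentAt X x ≤ TangentAt X (ρ • x) := by
  refine Submodule.span_le.2 ?_
  rintro v ⟨c, hc, hcX, hc0, rfl⟩
  have h1 : ρ • deriv c 0 ∈ TangentAt X (ρ • x) := by
    refine Submodule.subset_span ⟨fun t => ρ • c t, hc.const_smul ρ, fun t => hX _ (hcX t) _ hρ,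
      by simp [hc0], ?_⟩
    exact ((hc.differentiable (by simp) 0).hasDerivAt.const_smul ρ).deriv
  have h2 := Submodule.smul_mem _ ρ⁻¹ h1
  rwa [smul_smul, inv_mul_cancel₀ hρ.ne', one_smul] at h2

lemma tangent_smul {X : Set (Fd D)} (hX : ∀ x ∈ X, ∀ ρ : ℝ, 0 < ρ → ρ • x ∈ X) {x : Fd D}
    {ρ : ℝ} (hρ : 0 < ρ) : TangentAt X (ρ • x) = TangentAt X x := by
  refine le_antisymm ?_ (tangent_le_smul hX hρ)
  have := tangent_le_smul hX (x := ρ • x) (inv_pos.2 hρ)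
  rwa [smul_smul, inv_mul_cancel₀ hρ.ne', one_smul] at this

lemma NS_le_smul {X : Set (Fd D)} (hX : ∀ x ∈ X, ∀ ρ : ℝ, 0 < ρ → ρ • x ∈ X) {x : Fd D}
    {ρ : ℝ} (hρ : 0 < ρ) : NS X x ≤ NS X (ρ • x) := by
  rintro v ⟨hv, hv'⟩
  refine ⟨by rw [tangent_smul hX hρ]; exact hv, ?_⟩
  intro c hc hcX hc0
  have h1 := hv' (fun t => ρ⁻¹ • c t) (hc.const_smul _) (fun t => hX _ (hcX t) _ (inv_pos.2 hρ))
    (by simp only [hc0, smul_smul, inv_mul_cancel₀ hρ.ne', one_smul])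
  have h2 : (fun t => Gp X (ρ⁻¹ • c t)) = fun t => Gp X (c t) := by
    funext t; simp only [Gp, tangent_smul hX (inv_pos.2 hρ)]
  rwa [h2] at h1

lemma NS_smul {X : Set (Fd D)} (hX : ∀ x ∈ X, ∀ ρ : ℝ, 0 < ρ → ρ • x ∈ X) {x : Fd D}
    {ρ : ℝ} (hρ : 0 < ρ) : NS X (ρ • x) = NS X x := by
  refine le_antisymm ?_ (NS_le_smul hX hρ)
  have := NS_le_smul hX (x := ρ • x) (inv_pos.2 hρ)
  rwa [smul_smul, inv_mul_cancel₀ hρ.ne', one_smul] at this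

/-- Differentiating a tangent field along a curve. -/
lemma HasLP.field_deriv {X : Set (Fd D)} (h : HasLP E X) {c W : ℝ → Fd D} {W' : Fd D}
    (hc : ContDiff ℝ (⊤ : ℕ∞) c) (hcX : ∀ t, c t ∈ X) (hW : HasDerivAt W W' 0)
    (hWt : ∀ t, W t ∈ TangentAt X (c t)) :
    (deriv (fun t => Gp X (c t)) 0) (W 0) + Gp X (c 0) W' = W' := by
  obtain ⟨φ, U, u, hφ, hu, hux⟩ := h _ (hcX 0)
  obtain ⟨w, hw, h3⟩ := hφ.deriv_along hu (hc.differentiable (by simp) 0).hasDerivAt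
      (Eventually.of_forall hcX) hux.symm
  have h4 := h3 (Gp X) _ (hφ.G_hasFDerivAt hu)
  rw [h4.deriv]
  have h5 := h4.clm_apply hW
  have h6 : (fun t => Gp X (c t) (W t)) = W := by
    funext t
    unfold Gp
    exact Submodule.starProjection_eq_self_iff.2 (hWt t)
  rw [h6] at h5
  exact h5.unique hW

lemma self_mem_tangent {X : Set (Fd D)} (hX : ∀ x ∈ X, ∀ ρ : ℝ, 0 < ρ → ρ • x ∈ X) {x : Fd D}
    (hx : x ∈ X) : x ∈ TangentAt X x := by
  refine Submodule.subset_span ⟨fun t => Real.exp t • x, Real.contDiff_exp.smul contDiff_const,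
    fun t => hX _ hx _ (Real.exp_pos t), by simp, ?_⟩
  have := ((Real.hasDerivAt_exp 0).smul_const x).deriv
  simpa using this

lemma curve_deriv_mem {X : Set (Fd D)} {c : ℝ → Fd D} (hc : ContDiff ℝ (⊤ : ℕ∞) c)
    (hcX : ∀ t, c t ∈ X) (t : ℝ) : deriv c t ∈ TangentAt X (c t) := by
  refine Submodule.subset_span ⟨fun s => c (s + t), hc.comp (contDiff_id.add contDiff_const),
    fun s => hcX _, by simp, ?_⟩
  rw [deriv_comp_add_const]; simp

lemma HasLP.self_mem_NS {X : Set (Fd D)} (h : HasLP E X)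
    (hX : ∀ x ∈ X, ∀ ρ : ℝ, 0 < ρ → ρ • x ∈ X) {x : Fd D} (hx : x ∈ X) : x ∈ NS X x := by
  refine ⟨self_mem_tangent hX hx, fun c hc hcX hc0 => ?_⟩
  have h1 := h.field_deriv hc hcX (hc.differentiable (by simp) 0).hasDerivAt
    (fun t => self_mem_tangent hX (hcX t))
  have h2 : Gp X (c 0) (deriv c 0) = deriv c 0 :=
    Submodule.starProjection_eq_self_iff.2 (curve_deriv_mem hc hcX 0)
  rw [h2, hc0] at h1
  simpa using h1

end cone

/-- the constant of the model ODE -/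
def lamOf (k : SpaceFormKind) {D : ℕ} (v : Fd D) : ℝ :=
  match k with
  | .euclidean => 0
  | .sphere => - aForm .sphere v v
  | .hyperbolic => aForm .hyperbolic v v

/-- Relation between the submanifold `S` of the space form and its (cone) model `X`. -/
structure Bridge (k : SpaceFormKind) {D : ℕ} (n : ℕ) (E : Type*) [NormedAddCommGroup E]
    [NormedSpace ℝ E] (S X : Set (Fd D)) : Prop where
  hS : HasLP (Fd n) S
  hX : HasLP E X
  sub : S ⊆ X
  tan : ∀ p ∈ S, TangentAt X p = TangentAt S p ⊔ radialAt k p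
  disj : ∀ p ∈ S, Disjoint (TangentAt S p) (radialAt k p)
  rad : ∀ p ∈ S, radialAt k p ≤ NS X p
  frank : ∃ r : ℕ, ∀ p ∈ S, Module.finrank ℝ (radialAt k p) = r
  scale : ∀ x ∈ X, ∃ p ∈ S, NS X x = NS X p
  self : k ≠ .euclidean → ∀ x ∈ X, x ∈ NS X x
  perp : k ≠ .euclidean → ∀ p ∈ S, ∀ v ∈ TangentAt S p, aForm k p v = 0
  nd : ∀ p ∈ S, ∀ v ∈ TangentAt S p, (∀ w ∈ TangentAt S p, aForm k v w = 0) → v = 0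
  ret : ∀ q ∈ S, ∀ v ∈ TangentAt S q, ∀ a b : ℝ, a ^ 2 - lamOf k v * b ^ 2 = 1 →
    a • q + b • v ∈ X → a • q + b • v ∈ S

section bridge
set_option linter.unusedSectionVars false
variable {k : SpaceFormKind} {D n : ℕ} {E : Type*} [NormedAddCommGroup E] [NormedSpace ℝ E]
  [FiniteDimensional ℝ E] {S X : Set (Fd D)}

lemma LP.deriv_G_along {φ : E → Fd D} {U : Set E} (h : LP X φ U) {u w : E} (hu : u ∈ U)
    {c : ℝ → Fd D} (hc : ContDiff ℝ (⊤ : ℕ∞) c) (hcX : ∀ t, c t ∈ X) (hc0 : c 0 = φ u)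
    (hcd : deriv c 0 = fderiv ℝ φ u w) :
    deriv (fun t => Gp X (c t)) 0 = fderiv ℝ (fun u => Gp X (φ u)) u w := by
  obtain ⟨w', hw', h3⟩ := h.deriv_along hu (hc.differentiable (by simp) 0).hasDerivAt
      (Eventually.of_forall hcX) hc0
  have h4 := h3 (Gp X) _ (h.G_hasFDerivAt hu)
  rw [h4.deriv]
  have : w' = w := h.inj u hu (hw'.trans hcd)
  rw [this]

lemma Bridge.mem_nullityAt (B : Bridge k n E S X) {p v : Fd D} (hp : p ∈ S) :
    v ∈ nullityAt k S p ↔ v ∈ TangentAt S p ⊓ NS X p := by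
  obtain ⟨φ, U, u, hφ, hu, rfl⟩ := B.hX p (B.sub hp)
  have hTle : ∀ p ∈ S, TangentAt S p ≤ TangentAt X p := fun p hp => by
    rw [B.tan p hp]; exact le_sup_left
  constructor
  · rintro ⟨hv, hv'⟩
    refine ⟨hv, ?_⟩
    have hvX := hTle _ hp hv
    rw [hφ.tangent hu] at hvX
    obtain ⟨w, hw⟩ := hvX
    have hw : fderiv ℝ φ u w = v := hw
    refine (hφ.mem_NS_iff hu).2 ⟨w, hw, hφ.G_deriv_zero hu ?_⟩
    intro y hy
    rw [B.tan _ hp, Submodule.mem_sup] at hy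
    obtain ⟨y1, hy1, y2, hy2, rfl⟩ := hy
    rw [map_add]
    have e2 : fderiv ℝ (fun u => Gp X (φ u)) u w y2 = 0 :=
      ((hφ.mem_NS hu).1 (B.rad _ hp hy2)).2 w
    rw [e2, add_zero]
    obtain ⟨σ, V, z, hσ, hz, hzp⟩ := B.hS _ hp
    rw [← hzp, hσ.tangent hz] at hy1 hv
    obtain ⟨wy, hwy⟩ := hy1
    obtain ⟨wv, hwv⟩ := hv
    obtain ⟨c, hc, hcV, hc0, hcd, hsc, hscd⟩ := hσ.curve hz wv
    have hWs : ContDiff ℝ (⊤ : ℕ∞) (fun t => fderiv ℝ σ (c t) wy) := by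
      refine contDiff_iff_contDiffAt.2 fun t => ?_
      have h1 : ContDiffAt ℝ (⊤ : ℕ∞) (fderiv ℝ σ) (c t) :=
        (hσ.contDiffAt (hcV t)).fderiv_right (by simp)
      exact (h1.comp t hc.contDiffAt).clm_apply contDiffAt_const
    have hWt : ∀ t, fderiv ℝ σ (c t) wy ∈ TangentAt S (σ (c t)) := fun t => by
      rw [hσ.tangent (hcV t)]; exact ⟨wy, rfl⟩
    have hcS : ∀ t, σ (c t) ∈ S := fun t => hσ.maps _ (hcV t)
    have hp0 : σ (c 0) = φ u := by rw [hc0, hzp]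
    have h1 := hv' (fun t => σ (c t)) _ hsc hcS hp0 (hscd.deriv.trans hwv) hWs hWt
    rw [← B.tan _ hp] at h1
    have h2 := B.hX.field_deriv hsc (fun t => B.sub (hcS t))
      (hWs.differentiable (by simp) 0).hasDerivAt (fun t => hTle _ (hcS t) (hWt t))
    rw [hφ.deriv_G_along hu hsc (fun t => B.sub (hcS t)) hp0
      (w := w) ((hscd.deriv.trans hwv).trans hw.symm)] at h2
    have h3 : Gp X (σ (c 0)) (deriv (fun t => fderiv ℝ σ (c t) wy) 0) =
        deriv (fun t => fderiv ℝ σ (c t) wy) 0 := by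
      rw [hp0]; exact Submodule.starProjection_eq_self_iff.2 h1
    have h4 : fderiv ℝ σ (c 0) wy = y1 := by rw [hc0]; exact hwy
    rw [h3, h4] at h2
    simpa using h2
  · rintro ⟨hv, hvN⟩
    refine ⟨hv, ?_⟩
    intro c W hc hcS hc0 hcd hW hWt
    obtain ⟨w, hw, hw'⟩ := (hφ.mem_NS_iff hu).1 hvN
    have h2 := B.hX.field_deriv hc (fun t => B.sub (hcS t))
      (hW.differentiable (by simp) 0).hasDerivAt (fun t => hTle _ (hcS t) (hWt t))
    rw [hφ.deriv_G_along hu hc (fun t => B.sub (hcS t)) hc0 (w := w) (hcd.trans hw.symm), hw',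
      hc0] at h2
    rw [← B.tan _ hp]
    have h3 : Gp X (φ u) (deriv W 0) = deriv W 0 := by simpa using h2
    exact Submodule.starProjection_eq_self_iff.1 h3

lemma Bridge.nullityIndex_eq (B : Bridge k n E S X) :
    ∃ r, ∀ p ∈ S, Module.finrank ℝ (NS X p) = nullityIndex k S p + r := by
  obtain ⟨r, hr⟩ := B.frank
  refine ⟨r, fun p hp => ?_⟩
  have h1 : nullityAt k S p = ((TangentAt S p ⊓ NS X p : Submodule ℝ (Fd D)) : Set (Fd D)) := by
    ext v; exact B.mem_nullityAt hp
  have h2 : nullityIndex k S p = Module.finrank ℝ (TangentAt S p ⊓ NS X p : Submodule ℝ (Fd D)) := by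
    unfold nullityIndex Set.finrank
    rw [h1, Submodule.span_eq]
  rw [h2, ← hr p hp]
  have h3 : NS X p = (TangentAt S p ⊓ NS X p) ⊔ radialAt k p := by
    apply le_antisymm
    · intro v hv
      have hvT : v ∈ TangentAt X p := hv.1
      rw [B.tan p hp, Submodule.mem_sup] at hvT
      obtain ⟨y, hy, z, hz, rfl⟩ := hvT
      have hyN : y ∈ NS X p := by
        have := sub_mem hv (B.rad p hp hz)
        simpa using this
      exact Submodule.mem_sup.2 ⟨y, ⟨hy, hyN⟩, z, hz, rfl⟩
    · exact sup_le inf_le_right (B.rad p hp)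
  have h4 := Submodule.finrank_sup_add_finrank_inf_eq (TangentAt S p ⊓ NS X p) (radialAt k p)
  have h5 : (TangentAt S p ⊓ NS X p) ⊓ radialAt k p = ⊥ :=
    ((B.disj p hp).mono_left inf_le_left).eq_bot
  rw [h5, ← h3] at h4
  simpa using h4

lemma Bridge.minN (B : Bridge k n E S X) {p : Fd D} (hp : p ∈ minNullitySet k S) : MinN X p := by
  obtain ⟨r, hr⟩ := B.nullityIndex_eq
  intro y hy
  obtain ⟨y', hy', he⟩ := B.scale y hy
  rw [he, hr y' hy', hr p hp.1]
  have := hp.2 y' hy'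
  omega

lemma Bridge.min_of_NS (B : Bridge k n E S X) {p q : Fd D} (hp : p ∈ minNullitySet k S)
    (hq : q ∈ S) (h : NS X q = NS X p) : q ∈ minNullitySet k S := by
  obtain ⟨r, hr⟩ := B.nullityIndex_eq
  refine ⟨hq, fun y hy => ?_⟩
  have h1 := hr q hq
  rw [h, hr p hp.1] at h1
  have := hp.2 y hy
  omega

end bridge

/-- The linear operator representing the ambient form. -/
def Jop (k : SpaceFormKind) (D : ℕ) : Fd D →L[ℝ] Fd D :=
  LinearMap.toContinuousLinearMap
    { toFun := fun x => WithLp.toLp 2 (fun i => formSign k D i * x i)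
      map_add' := fun x y => by ext i; simp [mul_add]
      map_smul' := fun r x => by ext i; simp; ring }

lemma aForm_eq (k : SpaceFormKind) {D : ℕ} (x y : Fd D) : aForm k x y = inner ℝ (Jop k D x) y := by
  rw [PiLp.inner_apply]
  unfold aForm
  refine Finset.sum_congr rfl fun i _ => ?_
  simp [Jop]
  ring

lemma aForm_comm (k : SpaceFormKind) {D : ℕ} (x y : Fd D) : aForm k x y = aForm k y x := by
  unfold aForm
  exact Finset.sum_congr rfl fun i _ => by ring

lemma aForm_add_left (k : SpaceFormKind) {D : ℕ} (x x' y : Fd D) :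
    aForm k (x + x') y = aForm k x y + aForm k x' y := by
  simp only [aForm_eq, map_add, inner_add_left]

lemma aForm_add_right (k : SpaceFormKind) {D : ℕ} (x y y' : Fd D) :
    aForm k x (y + y') = aForm k x y + aForm k x y' := by
  simp only [aForm_eq, inner_add_right]

lemma aForm_smul_left (k : SpaceFormKind) {D : ℕ} (r : ℝ) (x y : Fd D) :
    aForm k (r • x) y = r * aForm k x y := by
  simp only [aForm_eq, map_smul, real_inner_smul_left]

lemma aForm_smul_right (k : SpaceFormKind) {D : ℕ} (r : ℝ) (x y : Fd D) :
    aForm k x (r • y) = r * aForm k x y := by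
  simp only [aForm_eq, real_inner_smul_right]

lemma aForm_euc {k : SpaceFormKind} (hk : k ≠ .hyperbolic) {D : ℕ} {v : Fd D}
    (h : aForm k v v = 0) : v = 0 := by
  have h1 : aForm k v v = ∑ i, (v i)^2 := by
    unfold aForm
    refine Finset.sum_congr rfl fun i _ => ?_
    cases k <;> simp [formSign] at hk ⊢ <;> ring
  rw [h1, Finset.sum_eq_zero_iff_of_nonneg (fun i _ => sq_nonneg _)] at h
  ext i
  simpa using h i (Finset.mem_univ i)

lemma aForm_hyp {D : ℕ} {p v : Fd D} (hp : aForm .hyperbolic p p = -1)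
    (hpv : aForm .hyperbolic p v = 0) (h : aForm .hyperbolic v v = 0) : v = 0 := by
  cases D with
  | zero => ext i; exact i.elim0
  | succ d =>
    have key : ∀ x y : Fd (d+1), aForm .hyperbolic x y =
        ∑ i : Fin d, x i.castSucc * y i.castSucc - x (Fin.last d) * y (Fin.last d) := by
      intro x y
      unfold aForm
      rw [Fin.sum_univ_castSucc]
      have : ∀ i : Fin d, formSign .hyperbolic (d+1) i.castSucc = 1 := by
        intro i
        have := i.isLt
        simp only [formSign, Fin.val_castSucc]
        rw [if_neg (by omega)]
      simp only [this]
      simp [formSign]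
      ring
    rw [key] at hp hpv h
    have hcs := Finset.sum_mul_sq_le_sq_mul_sq Finset.univ (fun i : Fin d => p i.castSucc)
      (fun i : Fin d => v i.castSucc)
    simp only [← pow_two] at hp h
    set P := ∑ i : Fin d, p i.castSucc ^ 2
    set V := ∑ i : Fin d, v i.castSucc ^ 2 with hV
    set C := ∑ i : Fin d, p i.castSucc * v i.castSucc
    set a := p (Fin.last d)
    set b := v (Fin.last d)
    have hC : C = a * b := by linarith
    have hV' : V = b ^ 2 := by linarith
    have hP : P = a ^ 2 - 1 := by linarith
    rw [hC, hV', hP] at hcs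
    have hb : b = 0 := by nlinarith
    have hV0 : V = 0 := by rw [hV', hb]; ring
    rw [hV, Finset.sum_eq_zero_iff_of_nonneg (fun i _ => sq_nonneg _)] at hV0
    ext i
    refine Fin.lastCases ?_ (fun i => ?_) i
    · simpa using hb
    · simpa using hV0 i (Finset.mem_univ i)

lemma aForm_perp {k : SpaceFormKind} {D : ℕ} {S : Set (Fd D)} {ε : ℝ}
    (hS : ∀ p ∈ S, aForm k p p = ε) {p : Fd D} {v : Fd D} (hv : v ∈ TangentAt S p) :
    aForm k p v = 0 := by
  induction hv using Submodule.span_induction with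
  | mem v hv =>
    obtain ⟨c, hc, hcS, hc0, rfl⟩ := hv
    have hd := (hc.differentiable (by simp) 0).hasDerivAt
    have h1 := ((Jop k D).hasFDerivAt.comp_hasDerivAt (0:ℝ) hd).inner ℝ hd
    have h2 : (fun t => inner ℝ ((⇑(Jop k D) ∘ c) t) (c t)) = fun _ => ε := by
      funext t
      rw [← hS _ (hcS t), aForm_eq]; rfl
    rw [h2] at h1
    have h3 := h1.unique (hasDerivAt_const (0:ℝ) ε)
    have h4 : inner ℝ ((⇑(Jop k D) ∘ c) 0) (deriv c 0) = aForm k p (deriv c 0) := by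
      rw [aForm_eq, ← hc0]; rfl
    rw [h4, ← aForm_eq, aForm_comm, hc0] at h3
    rw [aForm_comm]
    linarith
  | zero => simp [aForm_eq]
  | add x y _ _ hx hy => rw [aForm_add_right, hx, hy, add_zero]
  | smul r x _ hx => rw [aForm_smul_right, hx, mul_zero]

lemma bridge_euc {D n : ℕ} {S : Set (Fd D)} (h : IsSubmanifold S n) :
    Bridge .euclidean n (Fd n) S S where
  hS := hasLP_of_submanifold h
  hX := hasLP_of_submanifold h
  sub := Subset.rfl
  tan := fun p _ => by simp [radialAt]
  disj := fun p _ => by simp [radialAt]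
  rad := fun p _ => by simp [radialAt]
  frank := ⟨0, fun p _ => finrank_bot ℝ (Fd D)⟩
  scale := fun x hx => ⟨x, hx, rfl⟩
  self := fun h => absurd rfl h
  perp := fun h => absurd rfl h
  nd := fun p _ v hv h => aForm_euc (by simp) (h v hv)
  ret := fun _ _ _ _ _ _ _ h => h

lemma bridge_cone {k : SpaceFormKind} {D n : ℕ} {S : Set (Fd D)} (h : IsSubmanifold S n)
    (hk : k ≠ .euclidean) {ε : ℝ} (hε : ε ^ 2 = 1) (hS : ∀ p ∈ S, aForm k p p = ε)
    (hlam : ∀ v : Fd D, lamOf k v = - ε * aForm k v v)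
    (hnd : ∀ p ∈ S, ∀ v, aForm k p v = 0 → aForm k v v = 0 → v = 0) :
    Bridge k n (Fd n × ℝ) S (Cone S) := by
  have hrad : ∀ p : Fd D, radialAt k p = Submodule.span ℝ {p} := by
    intro p; cases k <;> simp [radialAt] at hk ⊢
  set m : Fd D → ℝ := fun x => Real.sqrt (ε * aForm k x x) with hmdef
  have hval : ∀ ρ : ℝ, ∀ y ∈ S, ε * aForm k (ρ • y) (ρ • y) = ρ ^ 2 := by
    intro ρ y hy
    rw [aForm_smul_left, aForm_smul_right, hS y hy]
    linear_combination ρ ^ 2 * hε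
  have hm : ∀ ρ : ℝ, 0 < ρ → ∀ y ∈ S, m (ρ • y) = ρ := by
    intro ρ hρ y hy
    rw [hmdef]
    simp only
    rw [hval ρ y hy, Real.sqrt_sq hρ.le]
  have hms : ∀ x ∈ Cone S, ContDiffAt ℝ (⊤ : ℕ∞) m x := by
    rintro x ⟨ρ, hρ, y, hy, rfl⟩
    refine ContDiffAt.sqrt ?_ (by rw [hval ρ y hy]; positivity)
    simp only [aForm_eq]
    exact (contDiff_const.mul ((Jop k D).contDiff.inner ℝ contDiff_id)).contDiffAt
  have hL := hasLP_of_submanifold h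
  have hX := hasLP_cone hL hm hms
  have hsc : ∀ x ∈ Cone S, ∀ ρ : ℝ, 0 < ρ → ρ • x ∈ Cone S := fun x hx ρ hρ => cone_smul hx hρ
  have hself : ∀ x ∈ Cone S, x ∈ NS (Cone S) x := fun x hx => hX.self_mem_NS hsc hx
  have hne : ∀ p ∈ S, p ≠ 0 := by
    rintro p hp rfl
    have := hS 0 hp
    simp [aForm_eq] at this
    rw [← this] at hε
    norm_num at hε
  have hperp : ∀ p ∈ S, ∀ v ∈ TangentAt S p, aForm k p v = 0 := fun p _ v hv => aForm_perp hS hv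
  refine ⟨hL, hX, cone_sub, ?_, ?_, ?_, ⟨1, ?_⟩, ?_, fun _ => hself, fun _ => hperp, ?_, ?_⟩
  · intro p hp; rw [hrad]; exact (cone_tangent hL hm hms hp).1
  · intro p hp; rw [hrad]; exact (cone_tangent hL hm hms hp).2
  · intro p hp
    rw [hrad, Submodule.span_singleton_le_iff_mem]
    exact hself p (cone_sub hp)
  · intro p hp; rw [hrad]; exact finrank_span_singleton (hne p hp)
  · rintro x ⟨ρ, hρ, y, hy, rfl⟩
    exact ⟨y, hy, NS_smul hsc hρ⟩
  · intro p hp v hv hw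
    exact hnd p hp v (hperp p hp v hv) (hw v hv)
  · rintro q hq v hv a b hab ⟨ρ, hρ, y, hy, he⟩
    have h1 := hval ρ y hy
    rw [← he] at h1
    have h2 := hperp q hq v hv
    have h3 : aForm k (a • q + b • v) (a • q + b • v) = a ^ 2 * ε + b ^ 2 * aForm k v v := by
      simp only [aForm_add_left, aForm_add_right, aForm_smul_left, aForm_smul_right, hS q hq, h2,
        aForm_comm k v q]
      ring
    rw [h3] at h1
    rw [hlam v] at hab
    have h4 : ρ ^ 2 = 1 := by linear_combination -h1 + hab + a ^ 2 * hε
    have h5 : ρ = 1 := by nlinarith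
    rw [he, h5, one_smul]
    exact hy

section geod
set_option linter.unusedSectionVars false
variable {k : SpaceFormKind} {D n : ℕ} {S : Set (Fd D)}

lemma hess_inj {A : Fd n →L[ℝ] Fd D} {T : Submodule ℝ (Fd D)} (hA : Function.Injective A)
    (hT : T = LinearMap.range (A : Fd n →ₗ[ℝ] Fd D))
    (hnd : ∀ v ∈ T, (∀ w ∈ T, aForm k v w = 0) → v = 0) :
    Function.Injective ((ContinuousLinearMap.adjoint A) ∘L (Jop k D) ∘L A) := by
  rw [injective_iff_map_eq_zero]
  intro w hw
  have h1 : A w = 0 := by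
    refine hnd (A w) (by rw [hT]; exact ⟨w, rfl⟩) ?_
    rw [hT]
    rintro _ ⟨w', rfl⟩
    rw [aForm_eq]
    change inner ℝ (Jop k D (A w)) (A w') = 0
    rw [← ContinuousLinearMap.adjoint_inner_left]
    have : (ContinuousLinearMap.adjoint A) (Jop k D (A w)) = 0 := hw
    rw [this, inner_zero_left]
  exact hA (by rw [h1, map_zero])

lemma geod_unique (hS : HasLP (Fd n) S)
    (nd : ∀ p ∈ S, ∀ v ∈ TangentAt S p, (∀ w ∈ TangentAt S p, aForm k v w = 0) → v = 0)
    {t0 : ℝ} {γ c : ℝ → Fd D} (hγs : ContDiff ℝ (⊤ : ℕ∞) γ) (hcs : ContDiff ℝ (⊤ : ℕ∞) c)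
    (hγ : ∀ᶠ t in 𝓝 t0, γ t ∈ S ∧ ∀ v ∈ TangentAt S (γ t), aForm k (deriv (deriv γ) t) v = 0)
    (hc : ∀ᶠ t in 𝓝 t0, c t ∈ S ∧ ∀ v ∈ TangentAt S (c t), aForm k (deriv (deriv c) t) v = 0)
    (h0 : γ t0 = c t0) (h1 : deriv γ t0 = deriv c t0) : γ =ᶠ[𝓝 t0] c := by
  obtain ⟨φ, U, u, hφ, hu, hux⟩ := hS _ hγ.self_of_nhds.1
  obtain ⟨ψ, hψ, hψ0, hψe⟩ := hφ.inv u hu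
  set P : Fd D → Fd D →L[ℝ] Fd D := fun x => oblProj (Jop k D) (fderiv ℝ φ (ψ x)) with hP
  have hAinj : ∀ u ∈ U, Function.Injective
      ((ContinuousLinearMap.adjoint (fderiv ℝ φ u)) ∘L (Jop k D) ∘L (fderiv ℝ φ u)) := by
    intro u hu
    exact hess_inj (hφ.inj u hu) (hφ.tangent hu) (nd _ (hφ.maps u hu))
  have hPs : ContDiffAt ℝ (⊤ : ℕ∞) P (φ u) := by
    refine oblProj_contDiffAt (Jop k D) (fun x => fderiv ℝ φ (ψ x)) ?_ ?_
    · have h1 : ContDiffAt ℝ (⊤ : ℕ∞) (fderiv ℝ φ) (ψ (φ u)) := by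
        rw [hψ0]; exact (hφ.contDiffAt hu).fderiv_right (by simp)
      exact h1.comp (φ u) hψ
    · simp only [hψ0]; exact hAinj u hu
  have hPd : ∀ᶠ x in 𝓝 (φ u), DifferentiableAt ℝ P x := by
    have h1 : ContDiffAt ℝ 1 P (φ u) := hPs.of_le (by simp)
    filter_upwards [h1.eventually (by simp)] with x hx
    exact hx.differentiableAt (by simp)
  set F : Fd D × Fd D → Fd D × Fd D := fun z => (z.2, fderiv ℝ P z.1 z.2 z.2) with hF
  have hFs : ContDiffAt ℝ 1 F (φ u, deriv γ t0) := by
    refine contDiffAt_snd.prodMk ?_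
    have h1 : ContDiffAt ℝ 1 (fderiv ℝ P) (φ u) := hPs.fderiv_right (by
      norm_cast)
    have h2 : ContDiffAt ℝ 1 (fun z : Fd D × Fd D => fderiv ℝ P z.1) (φ u, deriv γ t0) :=
      ContDiffAt.comp (g := fderiv ℝ P) (φ u, deriv γ t0) h1 contDiffAt_fst
    exact (h2.clm_apply contDiffAt_snd).clm_apply contDiffAt_snd
  obtain ⟨K, s, hs, hLip⟩ := hFs.exists_lipschitzOnWith
  have main : ∀ g : ℝ → Fd D, ContDiff ℝ (⊤ : ℕ∞) g →
      (∀ᶠ t in 𝓝 t0, g t ∈ S ∧ ∀ v ∈ TangentAt S (g t), aForm k (deriv (deriv g) t) v = 0) →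
      g t0 = φ u → deriv g t0 = deriv γ t0 →
      ∀ᶠ t in 𝓝 t0, HasDerivAt (fun t => (g t, deriv g t)) (F (g t, deriv g t)) t ∧
        (g t, deriv g t) ∈ s := by
    intro g hg hgS hg0 hg1
    have hg' : ContDiff ℝ (⊤ : ℕ∞) (deriv g) := by
      have : ContDiff ℝ ((⊤ : ℕ∞) + 1) g := hg
      exact (contDiff_succ_iff_deriv.1 this).2.2
    have hcont : Tendsto g (𝓝 t0) (𝓝 (φ u)) := by
      rw [← hg0]; exact hg.continuous.continuousAt
    have hts : Tendsto (fun t => (g t, deriv g t)) (𝓝 t0) (𝓝 (φ u, deriv γ t0)) := by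
      rw [← hg0, ← hg1]
      exact (hg.continuous.prodMk hg'.continuous).continuousAt
    have hin : ∀ᶠ t in 𝓝 t0, ψ (g t) ∈ U ∧ φ (ψ (g t)) = g t := by
      have : Tendsto g (𝓝 t0) (𝓝[S] (φ u)) :=
        tendsto_nhdsWithin_iff.2 ⟨hcont, hgS.mono fun t ht => ht.1⟩
      exact this.eventually hψe
    have hfix : ∀ᶠ t in 𝓝 t0, P (g t) (deriv g t) = deriv g t := by
      filter_upwards [hin, hgS.eventually_nhds] with t ht1 ht2
      obtain ⟨w, hw, -⟩ := hφ.deriv_along ht1.1 (hg.differentiable (by simp) t).hasDerivAt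
        (ht2.mono fun t ht => ht.1) ht1.2.symm
      rw [← hw]
      exact oblProj_apply_range _ _ (hAinj _ ht1.1) w
    filter_upwards [hts.eventually hs, hin, hgS, hfix.eventually_nhds, hcont.eventually hPd]
      with t ht1 ht2 ht3 ht4 ht5
    refine ⟨?_, ht1⟩
    have hd1 := (hg.differentiable (by simp) t).hasDerivAt
    have hd2 := (hg'.differentiable (by simp) t).hasDerivAt
    refine hd1.prodMk ?_
    have h3 := (ht5.hasFDerivAt.comp_hasDerivAt t hd1).clm_apply hd2
    have h4 := (h3.congr_of_eventuallyEq (f₁ := deriv g) (by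
      filter_upwards [ht4] with t ht using ht.symm))
    have h5 : P (g t) (deriv (deriv g) t) = 0 := by
      refine oblProj_ker _ _ _ fun w => ?_
      rw [← aForm_eq]
      refine ht3.2 _ ?_
      rw [← ht2.2, hφ.tangent ht2.1, ht2.2]
      exact ⟨w, rfl⟩
    change HasDerivAt (deriv g) (fderiv ℝ P (g t) (deriv g t) (deriv g t)) t
    have h6 : (P ∘ g) t (deriv (deriv g) t) = 0 := h5
    rw [h6, add_zero] at h4
    exact h4
  have e1 := main γ hγs hγ hux.symm rfl
  have e2 := main c hcs hc (h0.symm.trans hux.symm) h1.symm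
  have e3 := ODE_solution_unique_of_eventually (v := fun _ => F) (s := fun _ => s) (K := K)
    (Eventually.of_forall fun _ => hLip) e1 e2 (by rw [h0, h1])
  filter_upwards [e3] with t ht
  exact congrArg Prod.fst ht

end geod

lemma model_ode (l : ℝ) : ∃ a b : ℝ → ℝ, ContDiff ℝ (⊤ : ℕ∞) a ∧ ContDiff ℝ (⊤ : ℕ∞) b ∧
    a 0 = 1 ∧ b 0 = 0 ∧ (∀ t, HasDerivAt a (l * b t) t) ∧ (∀ t, HasDerivAt b (a t) t) ∧
    (∀ t, a t ^ 2 - l * b t ^ 2 = 1) ∧ (l = 0 → ∀ t, a t = 1) := by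
  have hlin : ∀ w t : ℝ, HasDerivAt (fun t => w * t) w t := fun w t => by
    simpa using (hasDerivAt_id t).const_mul w
  have hcd : ∀ w : ℝ, ContDiff ℝ (⊤ : ℕ∞) (fun t : ℝ => w * t) := fun w =>
    contDiff_const.mul contDiff_id
  rcases lt_trichotomy l 0 with hl | hl | hl
  · obtain ⟨w, hw, hwl⟩ : ∃ w : ℝ, 0 < w ∧ l = - w ^ 2 :=
      ⟨Real.sqrt (-l), Real.sqrt_pos.2 (by linarith), by rw [Real.sq_sqrt (by linarith)]; ring⟩
    refine ⟨fun t => Real.cos (w * t), fun t => Real.sin (w * t) / w,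
      Real.contDiff_cos.comp (hcd w), (Real.contDiff_sin.comp (hcd w)).div_const w, by simp,
      by simp, ?_, ?_, ?_, fun h => absurd h hl.ne⟩
    · intro t
      refine HasDerivAt.congr_deriv ((Real.hasDerivAt_cos (w * t)).comp t (hlin w t)) ?_
      rw [hwl]; field_simp
    · intro t
      refine HasDerivAt.congr_deriv (((Real.hasDerivAt_sin (w * t)).comp t (hlin w t)).div_const w) ?_
      field_simp
    · intro t
      rw [hwl]
      field_simp
      have := Real.sin_sq_add_cos_sq (w * t)
      linarith
  · subst hl
    refine ⟨fun _ => 1, fun t => t, contDiff_const, contDiff_id, rfl, rfl, ?_, ?_, ?_, fun _ _ => rfl⟩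
    · intro t; simpa using hasDerivAt_const t (1:ℝ)
    · intro t; exact hasDerivAt_id t
    · intro t; ring
  · obtain ⟨w, hw, hwl⟩ : ∃ w : ℝ, 0 < w ∧ l = w ^ 2 :=
      ⟨Real.sqrt l, Real.sqrt_pos.2 hl, by rw [Real.sq_sqrt hl.le]⟩
    refine ⟨fun t => Real.cosh (w * t), fun t => Real.sinh (w * t) / w,
      Real.contDiff_cosh.comp (hcd w), (Real.contDiff_sinh.comp (hcd w)).div_const w, by simp,
      by simp, ?_, ?_, ?_, fun h => absurd h hl.ne'⟩
    · intro t
      refine HasDerivAt.congr_deriv ((Real.hasDerivAt_cosh (w * t)).comp t (hlin w t)) ?_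
      rw [hwl]; field_simp
    · intro t
      refine HasDerivAt.congr_deriv (((Real.hasDerivAt_sinh (w * t)).comp t (hlin w t)).div_const w) ?_
      field_simp
    · intro t
      rw [hwl]
      field_simp
      have := Real.cosh_sq (w * t)
      linarith

section fwd
set_option linter.unusedSectionVars false
variable {k : SpaceFormKind} {D n : ℕ} {E : Type*} [NormedAddCommGroup E] [NormedSpace ℝ E]
  [FiniteDimensional ℝ E] {S X : Set (Fd D)}

lemma Bridge.forward (B : Bridge k n E S X) {q v : Fd D} (hq : q ∈ minNullitySet k S)
    (hv : v ∈ nullityAt k S q) {γ : ℝ → Fd D} (hγ : IsGeodesicOn k S γ) (hγ0 : γ 0 = q)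
    (hγ1 : deriv γ 0 = v) :
    ∀ t, 0 ≤ t → NS X (γ t) = NS X q ∧ deriv γ t ∈ NS X q := by
  obtain ⟨a, b, has, hbs, ha0, hb0, had, hbd, hab, hlz⟩ := model_ode (lamOf k v)
  obtain ⟨hvT, hvN⟩ := (B.mem_nullityAt hq.1).1 hv
  have hqX := B.sub hq.1
  have hmin := B.minN hq
  have heuc : k = .euclidean → lamOf k v = 0 := by rintro rfl; rfl
  set c : ℝ → Fd D := fun t => a t • q + b t • v with hc
  have hcs : ContDiff ℝ (⊤ : ℕ∞) c :=
    (has.smul contDiff_const).add (hbs.smul contDiff_const)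
  have hcd : ∀ t, HasDerivAt c ((lamOf k v * b t) • q + a t • v) t := fun t =>
    ((had t).smul_const q).add ((hbd t).smul_const v)
  have hcd' : deriv c = fun t => (lamOf k v * b t) • q + a t • v := funext fun t => (hcd t).deriv
  have hcdd : ∀ t, deriv (deriv c) t = lamOf k v • c t := by
    intro t
    rw [hcd']
    have := (((hbd t).const_mul (lamOf k v)).smul_const q).add ((had t).smul_const v)
    refine (HasDerivAt.deriv this).trans ?_
    rw [hc]
    simp only [smul_add, smul_smul]
  have hcdN : ∀ t, deriv c t ∈ NS X q := by
    intro t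
    rw [hcd']
    refine add_mem ?_ (Submodule.smul_mem _ _ hvN)
    by_cases hk : k = .euclidean
    · rw [heuc hk]; simp
    · exact Submodule.smul_mem _ _ (B.self hk q hqX)
  have habN : ∀ x ∈ X, ∀ t t', (a t - a t') • x ∈ NS X x := by
    intro x hx t t'
    by_cases hk : k = .euclidean
    · rw [hlz (heuc hk), hlz (heuc hk)]; simp
    · exact Submodule.smul_mem _ _ (B.self hk x hx)
  have hγ' : ContDiff ℝ (⊤ : ℕ∞) (deriv γ) := by
    have : ContDiff ℝ ((⊤ : ℕ∞) + 1) γ := hγ.smooth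
    exact (contDiff_succ_iff_deriv.1 this).2.2
  have hcs' : ContDiff ℝ (⊤ : ℕ∞) (deriv c) := by
    have : ContDiff ℝ ((⊤ : ℕ∞) + 1) c := hcs
    exact (contDiff_succ_iff_deriv.1 this).2.2
  have hmain : ∀ T : ℝ, (∀ t, 0 ≤ t → t ≤ T → c t ∈ X) →
      ∀ t, 0 ≤ t → t ≤ T → Gp X (c t) = Gp X q ∧ NS X (c t) = NS X q := fun T hT =>
    B.hX.line_main hqX hmin hvN has.continuous hbs.continuous ha0 hb0 habN hT
  have key : ∀ T : ℝ, ∀ t, 0 ≤ t → t ≤ T → (γ t = c t ∧ deriv γ t = deriv c t) := by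
    intro T
    refine real_ind (fun t => γ t = c t ∧ deriv γ t = deriv c t) ?_ ?_ ?_
    · refine ⟨?_, ?_⟩
      · rw [hγ0, hc]; simp [ha0, hb0]
      · rw [hγ1, hcd']; simp [ha0, hb0]
    · intro t ht _ hQ
      have hX1 : ∀ s, 0 ≤ s → s ≤ t → c s ∈ X := fun s hs hst => by
        rw [← (hQ s hs hst).1]; exact B.sub (hγ.mem s)
      have hm := hmain t hX1 t ht le_rfl
      have hcX := hX1 t ht le_rfl
      have hmint : MinN X (c t) := by
        intro y hy
        rw [hm.2]; exact hmin y hy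
      have hloc := (B.hX.line_local hvN hqX has.continuous hbs.continuous habN hcX
        hmint).self_of_nhds
      have hcS : ∀ᶠ s in 𝓝 t, c s ∈ S := by
        filter_upwards [hloc] with s hs
        exact B.ret q hq.1 v hvT _ _ (hab s) (hs ⟨hcX, hm.1, hm.2⟩).1
      have hQt := hQ t ht le_rfl
      have huniq := geod_unique (k := k) B.hS B.nd hγ.smooth hcs
        (Eventually.of_forall fun s => ⟨hγ.mem s, hγ.accel_normal s⟩) (t0 := t) (by
          filter_upwards [hcS] with s hs
          refine ⟨hs, fun w hw => ?_⟩
          rw [hcdd, aForm_smul_left]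
          by_cases hk : k = .euclidean
          · rw [heuc hk, zero_mul]
          · rw [B.perp hk _ hs w hw, mul_zero]) hQt.1 hQt.2
      have h2 : ∀ᶠ s in 𝓝 t, γ s = c s ∧ deriv γ s = deriv c s := huniq.and huniq.deriv
      exact h2.filter_mono nhdsWithin_le_nhds
    · intro t ht _ hQ
      have hev : ∀ᶠ s in 𝓝[<] t, γ s = c s ∧ deriv γ s = deriv c s := by
        filter_upwards [Ioo_mem_nhdsLT ht] with s hs
        exact hQ s hs.1.le hs.2
      refine ⟨?_, ?_⟩
      · exact tendsto_nhds_unique_of_eventuallyEq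
          (hγ.smooth.continuous.continuousAt.tendsto.mono_left nhdsWithin_le_nhds)
          (hcs.continuous.continuousAt.tendsto.mono_left nhdsWithin_le_nhds)
          (hev.mono fun s hs => hs.1)
      · exact tendsto_nhds_unique_of_eventuallyEq
          (hγ'.continuous.continuousAt.tendsto.mono_left nhdsWithin_le_nhds)
          (hcs'.continuous.continuousAt.tendsto.mono_left nhdsWithin_le_nhds)
          (hev.mono fun s hs => hs.2)
  intro t ht
  have hk := key t t ht le_rfl
  refine ⟨?_, by rw [hk.2]; exact hcdN t⟩
  rw [hk.1]
  exact (hmain t (fun s hs hst => by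
    rw [← (key t s hs hst).1]; exact B.sub (hγ.mem s)) t ht le_rfl).2

lemma Bridge.stay (B : Bridge k n E S X) {q v : Fd D} (hq : q ∈ minNullitySet k S)
    (hv : v ∈ nullityAt k S q) {γ : ℝ → Fd D} (hγ : IsGeodesicOn k S γ) (hγ0 : γ 0 = q)
    (hγ1 : deriv γ 0 = v) (t : ℝ) :
    γ t ∈ minNullitySet k S ∧ deriv γ t ∈ nullityAt k S (γ t) := by
  have key : NS X (γ t) = NS X q ∧ deriv γ t ∈ NS X q := by
    rcases le_total 0 t with ht | ht
    · exact B.forward hq hv hγ hγ0 hγ1 t ht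
    · have hd1 : deriv (fun s => γ (-s)) = fun s => - deriv γ (-s) := by
        funext s; exact deriv_comp_neg γ s
      have hd2 : deriv (deriv (fun s => γ (-s))) = fun s => deriv (deriv γ) (-s) := by
        rw [hd1]; funext s
        rw [deriv.fun_neg, deriv_comp_neg (deriv γ) s, neg_neg]
      have hg : IsGeodesicOn k S (fun s => γ (-s)) :=
        ⟨hγ.smooth.comp contDiff_neg, fun s => hγ.mem _, fun s w hw => by
          rw [hd2]; exact hγ.accel_normal _ w hw⟩
      have hv' : -v ∈ nullityAt k S q := by
        rw [B.mem_nullityAt hq.1] at hv ⊢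
        exact neg_mem hv
      have h := B.forward hq hv' hg (by simpa using hγ0) (by rw [hd1]; simp [hγ1]) (-t)
        (by linarith)
      rw [hd1] at h
      simp only [neg_neg] at h
      exact ⟨h.1, by simpa using h.2⟩
  refine ⟨B.min_of_NS hq (hγ.mem t) key.1, ?_⟩
  rw [B.mem_nullityAt (hγ.mem t), key.1]
  exact ⟨curve_deriv_mem hγ.smooth hγ.mem t, key.2⟩

end fwd

lemma st_deriv_low {x : ℝ} (h : x ≤ 0) : deriv Real.smoothTransition x = 0 := by
  apply IsLocalMin.deriv_eq_zero
  refine Eventually.of_forall fun y => ?_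
  rw [Real.smoothTransition.zero_of_nonpos h]
  exact Real.smoothTransition.nonneg y

lemma st_deriv_high {x : ℝ} (h : 1 ≤ x) : deriv Real.smoothTransition x = 0 := by
  apply IsLocalMax.deriv_eq_zero
  refine Eventually.of_forall fun y => ?_
  rw [Real.smoothTransition.one_of_one_le h]
  exact Real.smoothTransition.le_one y

section leaf
set_option linter.unusedSectionVars false
variable {k : SpaceFormKind} {D n : ℕ} {E : Type*} [NormedAddCommGroup E] [NormedSpace ℝ E]
  [FiniteDimensional ℝ E] {S X : Set (Fd D)}

lemma leaf_concat {A : Set (Fd D)} {p q : Fd D}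
    (hsm : ∀ x ∈ A, ∀ r : ℝ, ∀ v ∈ nullityAt k S x, r • v ∈ nullityAt k S x)
    (hq : q ∈ leafThrough k S A p) {γ : ℝ → Fd D} (hγ : ContDiff ℝ (⊤ : ℕ∞) γ)
    (hγA : ∀ t, γ t ∈ A) (hγd : ∀ t, deriv γ t ∈ nullityAt k S (γ t)) (hγ0 : γ 0 = q) (T : ℝ) :
    γ T ∈ leafThrough k S A p := by
  obtain ⟨c, hc, hcA, hcd, hc0, hc1⟩ := hq
  have hst : ContDiff ℝ (⊤ : ℕ∞) Real.smoothTransition := Real.smoothTransition.contDiff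
  have hσ : ∀ t : ℝ, HasDerivAt (fun t => c (Real.smoothTransition (2 * t)) +
      γ (T * Real.smoothTransition (2 * t - 1)) - q)
      ((deriv Real.smoothTransition (2 * t) * 2) • deriv c (Real.smoothTransition (2 * t)) +
       (T * (deriv Real.smoothTransition (2 * t - 1) * 2)) •
        deriv γ (T * Real.smoothTransition (2 * t - 1))) t := by
    intro t
    have l1 : HasDerivAt (fun t : ℝ => 2 * t) 2 t := by
      simpa using (hasDerivAt_id t).const_mul (2:ℝ)
    have l2 : HasDerivAt (fun t : ℝ => 2 * t - 1) 2 t := l1.sub_const 1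
    have s1 := HasDerivAt.comp t ((hst.differentiable (by simp) (2 * t)).hasDerivAt) l1
    have s2 := (HasDerivAt.comp t ((hst.differentiable (by simp) (2 * t - 1)).hasDerivAt) l2).const_mul T
    have d1 := HasDerivAt.scomp t
      ((hc.differentiable (by simp) (Real.smoothTransition (2 * t))).hasDerivAt) s1
    have d2 := HasDerivAt.scomp t
      ((hγ.differentiable (by simp) (T * Real.smoothTransition (2 * t - 1))).hasDerivAt) s2
    exact (d1.add d2).sub_const q
  refine ⟨fun t => c (Real.smoothTransition (2 * t)) +
      γ (T * Real.smoothTransition (2 * t - 1)) - q, ?_, ?_, fun t => ?_, ?_, ?_⟩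
  · exact ((hc.comp (hst.comp (contDiff_const.mul contDiff_id))).add
      (hγ.comp (contDiff_const.mul (hst.comp ((contDiff_const.mul contDiff_id).sub
        contDiff_const))))).sub contDiff_const
  · intro t
    rcases le_total t (1/2) with ht | ht
    · simp only [Real.smoothTransition.zero_of_nonpos (show 2 * t - 1 ≤ 0 by linarith), mul_zero,
        hγ0, add_sub_cancel_right]
      exact hcA _
    · simp only [Real.smoothTransition.one_of_one_le (show 1 ≤ 2 * t by linarith), hc1,
        add_sub_cancel_left]
      exact hγA _
  · rw [(hσ t).deriv]
    rcases le_total t (1/2) with ht | ht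
    · have h0 : 2 * t - 1 ≤ 0 := by linarith
      simp only [Real.smoothTransition.zero_of_nonpos h0, st_deriv_low h0, mul_zero, zero_mul,
        hγ0, add_sub_cancel_right, zero_smul, add_zero]
      exact hsm _ (hcA _) _ _ (hcd _)
    · have h0 : 1 ≤ 2 * t := by linarith
      simp only [Real.smoothTransition.one_of_one_le h0, st_deriv_high h0, hc1, zero_mul,
        add_sub_cancel_left, zero_smul, zero_add]
      exact hsm _ (hγA _) _ _ (hγd _)
  · simp only [mul_zero, zero_sub, Real.smoothTransition.zero, hc0,
      Real.smoothTransition.zero_of_nonpos (show (-1:ℝ) ≤ 0 by norm_num), hγ0]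
    simp
  · have : (2:ℝ) - 1 = 1 := by norm_num
    simp only [this, Real.smoothTransition.one, mul_one, hc1,
      Real.smoothTransition.one_of_one_le (show (1:ℝ) ≤ 2 by norm_num)]
    simp

lemma Bridge.final (B : Bridge k n E S X) (hcomplete : GeodComplete k S) (p : Fd D) :
    ∀ q ∈ leafThrough k S (minNullitySet k S) p, ∀ v ∈ nullityAt k S q,
      ∃ γ : ℝ → Fd D, IsGeodesicOn k S γ ∧ γ 0 = q ∧ deriv γ 0 = v ∧
        ∀ t, γ t ∈ leafThrough k S (minNullitySet k S) p := by
  intro q hq v hv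
  have hqm : q ∈ minNullitySet k S := by
    obtain ⟨c, -, hcA, -, -, rfl⟩ := hq
    exact hcA 1
  obtain ⟨γ, hγ, hγ0, hγ1⟩ := hcomplete q hqm.1 v hv.1
  have hs := B.stay hqm hv hγ hγ0 hγ1
  refine ⟨γ, hγ, hγ0, hγ1, fun t => ?_⟩
  refine leaf_concat ?_ hq hγ.smooth (fun t => (hs t).1) (fun t => (hs t).2) hγ0 t
  intro x hx r w hw
  rw [B.mem_nullityAt hx.1] at hw ⊢
  exact Submodule.smul_mem _ _ hw

end leaf

lemma final_aux (k : SpaceFormKind) {D n : ℕ} (S : Set (Fd D)) (hSF : S ⊆ spaceForm k D)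
    (hsub : IsSubmanifold S n) (hcomplete : GeodComplete k S) (p : Fd D) :
    ∀ q ∈ leafThrough k S (minNullitySet k S) p, ∀ v ∈ nullityAt k S q,
      ∃ γ : ℝ → Fd D, IsGeodesicOn k S γ ∧ γ 0 = q ∧ deriv γ 0 = v ∧
        ∀ t, γ t ∈ leafThrough k S (minNullitySet k S) p := by
  cases k with
  | euclidean => exact (bridge_euc hsub).final hcomplete p
  | sphere =>
    have hS : ∀ p ∈ S, aForm .sphere p p = 1 := fun p hp => hSF hp
    exact (bridge_cone hsub (by simp) (ε := 1) (by norm_num) hS (fun v => by simp [lamOf])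
      (fun p _ v _ h => aForm_euc (by simp) h)).final hcomplete p
  | hyperbolic =>
    have hS : ∀ p ∈ S, aForm .hyperbolic p p = -1 := fun p hp => (hSF hp).1
    exact (bridge_cone hsub (by simp) (ε := -1) (by norm_num) hS (fun v => by simp [lamOf])
      (fun p hp v h1 h2 => aForm_hyp (hS p hp) h1 h2)).final hcomplete p

end NullityProof

/-- **Completeness of integral manifolds of the nullity distribution** (Ferus; Olmos–Vittone).
Let `M = S` be a complete Riemannian manifold isometrically immersed as an `n`-dimensional
submanifold of a space form (Euclidean space `ℝ^{n+k}`, the round sphere `S^{n+k}`, or hyperbolic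
space `H^{n+k}`).  Then for every point `p` of minimal index of nullity, the maximal integral
manifold of the nullity distribution `𝒩` through `p` (a totally geodesic submanifold of `M`, with
the induced metric) is a complete Riemannian manifold: every geodesic initial condition tangent to
the leaf gives rise to a geodesic of `M` defined on all of `ℝ` and remaining inside the leaf. -/
theorem nullity_leaf_complete (k : SpaceFormKind) (n codim : ℕ)
    (S : Set (EuclideanSpace ℝ (Fin (ambientDim k n codim))))
    (hSF : S ⊆ spaceForm k (ambientDim k n codim))
    (hsub : IsSubmanifold S n)
    (hcomplete : GeodComplete k S)
    (p : EuclideanSpace ℝ (Fin (ambientDim k n codim)))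
    (hp : p ∈ minNullitySet k S) :
    ∀ q ∈ leafThrough k S (minNullitySet k S) p, ∀ v ∈ nullityAt k S q,
      ∃ γ : ℝ → EuclideanSpace ℝ (Fin (ambientDim k n codim)),
        IsGeodesicOn k S γ ∧ γ 0 = q ∧ deriv γ 0 = v ∧
        ∀ t, γ t ∈ leafThrough k S (minNullitySet k S) p := by
  exact final_aux k S hSF hsub hcomplete p
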